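/- Let 0 < α ≤ 1 and 1 < p < ∞ satisfy αp > 1. There exist δ > 0 and C > 0, depending only on α and p, with the following property: for every Lipschitz function A : ℝ → ℝ with compact support whose Lipschitz constant is at most δ, letting Ω = {z ∈ ℂ : Im z > A(Re z)} and F(w) = (1/π) ∫_ℝ A'(x)/((x + i·A(x) − w)²) dx, one has ∬_{ℝ×ℝ} |A'(x) − A'(y)|^p / |x − y|^{αp} dx dy ≤ C ∫_Ω |F(z)|^p · dist(z, ∂Ω)^{p − αp} dm(z). (This is the Main Lemma: ∫_Ω |∂B(χ_Ω)|^p dist(·,∂Ω)^{p−αp} dm ≳ ‖N‖_{Ḃ^{α−1/p}_{p,p}(∂Ω)}^p for special Lipschitz domains with small slope.) -/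

import Mathlib

/-!
The proof linearizes the problem around the half-plane and absorbs the error.

Write `F(x, t)` for the value of `F` at the point of height `t` above the graph over `x`, and let
`G2` be the function obtained by replacing the kernel `1/ζ²` on the graph by the one on the line:
`G2 (x + it) = (1/π) ∫ A'(y) / (y - x - it)² dy`. It is the second derivative of the Cauchy integral
`G0` of `A`, and `u = Im G0'` (`uu`) is the Poisson extension of `A'`. Put
`φ(t) = ‖G2 (· + it)‖_p` and `γ(t) = ‖F(·, t)‖_p`, and let `b = p - αp`, so that `0 ≤ b < p - 1`.

* **Besov seminorm.** Going up from the boundary to height `|v|`, moving horizontally by `v` and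
  coming down again gives `‖A'(· + v) - A'‖_p ≤ |v| (2 |v|⁻¹ ∫₀^{|v|} φ + φ(|v|))` (`trace_path`).
  By Hardy's inequality the Besov seminorm is then at most a constant times the `L^p(t^b dt)` norm
  of `φ` (`lhs_le`).
* **Domain integral.** Since the distance from the point at height `t` above the graph to the graph
  is at least `t / 3`, the integral over `Ω` dominates the `L^p(t^b dt)` norm of `γ` (`gam_le`).
* **Comparison.** Integrating `dz/(z - w)²` along the graph gives zero, i.e.
  `∫ (1 + iA'(y)) k(y) dy = 0` for the graph kernel `k`, and likewise for the flat kernel. Hence for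
  every real constant `c`, `(1 + ic) F - G2 = (1/π) ∫ (A'(y) - c) (k - k₀)(y) dy` (`FF_identity`).
  Take `c = u(x, t)`. The difference `k - k₀` is `O(δ (|y - x| + t)⁻²)`, so the part `u(y, t) - c`
  of `A'(y) - c` is harmless. The remaining part `A' - u` is, up to the term `t Re G2`, minus the
  derivative in `y` of the Taylor remainder `VV` of `t ↦ Im G0 (y + it)`, and one integrates by
  parts against `k - k₀`, whose derivative is `O(δ (|y - x| + t)⁻³)` (`error_eq`). The differences
  of `u` and the remainder are integrals of `G2` along paths, so that after taking `Lᵖ` norms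
  `φ ≤ 2γ + 540 δ · LL φ`, where `LL` is a sum of Hardy operators (`phi_le`).
* **Absorption.** `LL` is bounded on `L^p(t^b dt)`, so for small `δ` the last term can be absorbed
  (`absorb`). The norm of `φ` need not be known to be finite: `φ(t) = O(1/t)` because `A'` is in
  `Lᵖ`, one has `LL (1/t) = 3/t`, and the inequality may be iterated until the contribution of this
  a priori bound vanishes.
-/

open MeasureTheory

namespace Beur
open Set Filter Topology
open scoped ENNReal

/-! ### Minkowski and Hardy inequalities with power weights, and absorption -/

/-- The `L^p` size of an `ℝ≥0∞`-valued function, with values in `ℝ≥0∞`. -/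
noncomputable def nrm {X : Type*} [MeasurableSpace X] (p : ℝ) (μ : Measure X) (H : X → ℝ≥0∞) :
    ℝ≥0∞ := (∫⁻ x, H x ^ p ∂μ) ^ (1 / p)

section Nrm
variable {X : Type*} [MeasurableSpace X] {Y : Type*} [MeasurableSpace Y] {p : ℝ}

lemma nrm_rpow (hp : 1 < p) (μ : Measure X) (H : X → ℝ≥0∞) :
    nrm p μ H ^ p = ∫⁻ x, H x ^ p ∂μ := by
  unfold nrm
  rw [← ENNReal.rpow_mul, one_div_mul_cancel (by positivity), ENNReal.rpow_one]

lemma nrm_mono (hp : 1 < p) {μ : Measure X} {H K : X → ℝ≥0∞} (h : ∀ᵐ x ∂μ, H x ≤ K x) :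
    nrm p μ H ≤ nrm p μ K := by
  unfold nrm
  apply ENNReal.rpow_le_rpow _ (by positivity)
  apply lintegral_mono_ae
  filter_upwards [h] with x hx
  exact ENNReal.rpow_le_rpow hx (by positivity)

lemma nrm_const_mul (hp : 1 < p) {μ : Measure X} {H : X → ℝ≥0∞} (hH : Measurable H) (c : ℝ≥0∞) :
    nrm p μ (fun x => c * H x) = c * nrm p μ H := by
  unfold nrm
  simp_rw [ENNReal.mul_rpow_of_nonneg _ _ (by positivity : (0:ℝ) ≤ p)]
  rw [lintegral_const_mul _ (hH.pow_const p), ENNReal.mul_rpow_of_nonneg _ _ (by positivity),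
    ← ENNReal.rpow_mul, mul_one_div_cancel (by positivity), ENNReal.rpow_one]

lemma nrm_add (hp : 1 < p) {μ : Measure X} {H K : X → ℝ≥0∞} (hH : Measurable H)
    (hK : Measurable K) :
    nrm p μ (fun x => H x + K x) ≤ nrm p μ H + nrm p μ K :=
  ENNReal.lintegral_Lp_add_le hH.aemeasurable hK.aemeasurable hp.le

/-- Minkowski's integral inequality, obtained from Hölder's inequality with a weight close to the
function `y ↦ nrm p μ (H y)`. -/
lemma nrm_lintegral_le (hp : 1 < p) {μ : Measure X} [SFinite μ] {ν : Measure Y} [SigmaFinite ν]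
    {H : Y → X → ℝ≥0∞} (hH : Measurable (Function.uncurry H)) :
    nrm p μ (fun x => ∫⁻ y, H y x ∂ν) ≤ ∫⁻ y, nrm p μ (H y) ∂ν := by
  have hp0 : 0 < p := by positivity
  have hNm : Measurable fun y => nrm p μ (H y) := by
    unfold nrm
    exact ((hH.pow_const p).lintegral_prod_right').pow_const _
  refine ENNReal.le_of_forall_pos_le_add fun ε hε hI => ?_
  obtain ⟨g, hg0, hgm, hgε⟩ := exists_pos_lintegral_lt_of_sigmaFinite ν
    (ε := (ε : ℝ≥0∞)) (by simpa using hε.ne')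
  -- a strictly positive, finite-mass majorant of the norms, so that its negative powers are usable
  set n : Y → ℝ≥0∞ := fun y => nrm p μ (H y) + g y with hn
  have hnm : Measurable n := hNm.add hgm.coe_nnreal_ennreal
  have hIn : ∫⁻ y, n y ∂ν ≤ (∫⁻ y, nrm p μ (H y) ∂ν) + ε := by
    rw [hn, lintegral_add_left hNm]
    gcongr
  refine le_trans ?_ hIn
  have hfin : ∫⁻ y, n y ∂ν ≠ ∞ := ne_top_of_le_ne_top (by simp [hI.ne]) hIn
  have hntop : ∀ᵐ y ∂ν, n y < ∞ := ae_lt_top hnm hfin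
  have hn0 : ∀ y, n y ≠ 0 := fun y => by
    have := hg0 y
    simp only [hn]
    intro h
    rw [add_eq_zero] at h
    exact this.ne' (by simpa using h.2)
  set q := Real.conjExponent p
  have hpq : p.HolderConjugate q := Real.HolderConjugate.conjExponent hp
  have hq0 : 0 < q := hpq.symm.pos
  have hrel : p / q = p - 1 := by
    have := hpq.sub_one_mul_conj
    field_simp
    linarith
  have key : ∀ x, (∫⁻ y, H y x ∂ν) ^ p ≤
      (∫⁻ y, n y ∂ν) ^ (p - 1) * ∫⁻ y, H y x ^ p * n y ^ (1 - p) ∂ν := by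
    intro x
    have hHx : Measurable fun y => H y x := hH.comp (measurable_id.prodMk measurable_const)
    have h1 : ∫⁻ y, H y x ∂ν = ∫⁻ y, ((fun y => H y x * n y ^ (-(1/q))) *
        (fun y => n y ^ (1/q))) y ∂ν := by
      apply lintegral_congr_ae
      filter_upwards [hntop] with y hy
      simp only [Pi.mul_apply]
      rw [mul_assoc, ← ENNReal.rpow_add _ _ (hn0 y) hy.ne]
      simp
    rw [h1]
    refine le_trans (ENNReal.rpow_le_rpow (ENNReal.lintegral_mul_le_Lp_mul_Lq ν hpq
      (hHx.mul (hnm.pow_const _)).aemeasurable (hnm.pow_const _).aemeasurable) hp0.le) ?_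
    rw [ENNReal.mul_rpow_of_nonneg _ _ hp0.le, ← ENNReal.rpow_mul, ← ENNReal.rpow_mul,
      one_div_mul_cancel hp0.ne', ENNReal.rpow_one, mul_comm]
    apply mul_le_mul'
    · simp_rw [← ENNReal.rpow_mul]
      rw [one_div_mul_cancel hq0.ne', one_div_mul_eq_div, hrel]
      simp
    · apply lintegral_mono
      intro y
      simp only
      rw [ENNReal.mul_rpow_of_nonneg _ _ hp0.le, ← ENNReal.rpow_mul]
      rw [show -(1/q) * p = 1 - p by rw [neg_mul, one_div_mul_eq_div, hrel]; ring]
  have hmeas : Measurable fun z : X × Y => H z.2 z.1 ^ p * n z.2 ^ (1 - p) :=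
    ((hH.comp measurable_swap).pow_const p).mul ((hnm.comp measurable_snd).pow_const _)
  have key2 : ∫⁻ x, ∫⁻ y, H y x ^ p * n y ^ (1 - p) ∂ν ∂μ ≤ ∫⁻ y, n y ∂ν := by
    rw [lintegral_lintegral_swap hmeas.aemeasurable]
    apply lintegral_mono_ae
    filter_upwards [hntop] with y hy
    have hHy : Measurable fun x => H y x := hH.comp (measurable_const.prodMk measurable_id)
    rw [lintegral_mul_const _ (hHy.pow_const _), ← nrm_rpow hp]
    calc nrm p μ (fun x => H y x) ^ p * n y ^ (1 - p) ≤ n y ^ p * n y ^ (1 - p) := by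
          gcongr
          simp [hn]
      _ = n y := by
          rw [← ENNReal.rpow_add _ _ (hn0 y) hy.ne]; simp
  unfold nrm
  rw [one_div, ENNReal.rpow_inv_le_iff hp0]
  calc ∫⁻ x, (∫⁻ y, H y x ∂ν) ^ p ∂μ
      ≤ ∫⁻ x, (∫⁻ y, n y ∂ν) ^ (p - 1) * ∫⁻ y, H y x ^ p * n y ^ (1 - p) ∂ν ∂μ :=
        lintegral_mono key
    _ = (∫⁻ y, n y ∂ν) ^ (p - 1) * ∫⁻ x, ∫⁻ y, H y x ^ p * n y ^ (1 - p) ∂ν ∂μ :=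
        lintegral_const_mul _ hmeas.lintegral_prod_right'
    _ ≤ (∫⁻ y, n y ∂ν) ^ (p - 1) * ∫⁻ y, n y ∂ν := by gcongr
    _ = (∫⁻ y, n y ∂ν) ^ p := by
        nth_rewrite 2 [← ENNReal.rpow_one (∫⁻ y, n y ∂ν)]
        rw [← ENNReal.rpow_add_of_nonneg _ _ (by linarith) zero_le_one]
        simp

end Nrm

/-- The measure `t ^ b dt` on the half-line `(0, ∞)`. -/
noncomputable def wt (b : ℝ) : Measure ℝ :=
  (volume.restrict (Ioi 0)).withDensity fun t => ENNReal.ofReal (t ^ b)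

lemma lintegral_wt (b : ℝ) {F : ℝ → ℝ≥0∞} (hF : Measurable F) :
    ∫⁻ t, F t ∂(wt b) = ∫⁻ t in Ioi 0, ENNReal.ofReal (t ^ b) * F t := by
  unfold wt
  rw [lintegral_withDensity_eq_lintegral_mul _ (by fun_prop) hF]
  rfl

lemma ae_wt {b : ℝ} : ∀ᵐ t ∂(wt b), 0 < t := by
  unfold wt
  refine (withDensity_absolutelyContinuous _ _).ae_le ?_
  exact ae_restrict_mem measurableSet_Ioi

instance (b : ℝ) : SFinite (wt b) := by unfold wt; infer_instance

lemma setLIntegral_scale {s : ℝ} (hs : 0 < s) (S : Set ℝ) (hS : MeasurableSet S) {F : ℝ → ℝ≥0∞}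
    (hF : Measurable F) :
    ∫⁻ t in (fun t => s * t) ⁻¹' S, F (s * t) = ENNReal.ofReal s⁻¹ * ∫⁻ t in S, F t := by
  rw [← lintegral_indicator (by measurability), ← lintegral_indicator hS]
  have : (fun t => ((fun t => s * t) ⁻¹' S).indicator (fun t => F (s * t)) t) =
    fun t => S.indicator F (s * t) := by
    ext t; simp only [indicator, mem_preimage]; rfl
  rw [this, ← lintegral_map (f := S.indicator F) (hF.indicator hS) (by fun_prop),
    Real.map_volume_mul_left hs.ne', lintegral_smul_measure, abs_of_pos (by positivity)]
  rfl

lemma setLIntegral_scale_Ioi {s : ℝ} (hs : 0 < s) (a : ℝ) {F : ℝ → ℝ≥0∞}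
    (hF : Measurable F) :
    ∫⁻ t in Ioi a, F (t * s) = ENNReal.ofReal s⁻¹ * ∫⁻ t in Ioi (a * s), F t := by
  rw [← setLIntegral_scale hs _ measurableSet_Ioi hF]
  have : (fun t => s * t) ⁻¹' Ioi (a * s) = Ioi a := by
    ext t; simp only [mem_preimage, mem_Ioi, mul_comm a s]; exact mul_lt_mul_iff_right₀ hs
  rw [this]; simp_rw [mul_comm]

lemma setLIntegral_scale_Ioc {s : ℝ} (hs : 0 < s) (a b : ℝ) {F : ℝ → ℝ≥0∞}
    (hF : Measurable F) :
    ∫⁻ t in Ioc a b, F (t * s) = ENNReal.ofReal s⁻¹ * ∫⁻ t in Ioc (a * s) (b * s), F t := by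
  rw [← setLIntegral_scale hs _ measurableSet_Ioc hF]
  have : (fun t => s * t) ⁻¹' Ioc (a * s) (b * s) = Ioc a b := by
    ext t; simp only [mem_preimage, mem_Ioc, mul_comm a s, mul_comm b s]
    rw [mul_lt_mul_iff_right₀ hs, mul_le_mul_iff_right₀ hs]
  rw [this]; simp_rw [mul_comm]

/-- Scaling of the weighted norm, the source of the convergence conditions in Hardy's
inequalities. -/
lemma nrm_dilate {p b s : ℝ} (hp : 1 < p) (hs : 0 < s) {F : ℝ → ℝ≥0∞} (hF : Measurable F) :
    nrm p (wt b) (fun t => F (s * t)) = ENNReal.ofReal (s ^ (-(b + 1) / p)) * nrm p (wt b) F := by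
  unfold nrm
  rw [lintegral_wt _ (by fun_prop), lintegral_wt _ (by fun_prop)]
  have h1 : ∫⁻ t in Ioi (0:ℝ), ENNReal.ofReal (t ^ b) * F (s * t) ^ p =
      ∫⁻ t in Ioi (0:ℝ), ENNReal.ofReal (s ^ (-b)) *
        (fun t => ENNReal.ofReal (t ^ b) * F t ^ p) (t * s) := by
    apply setLIntegral_congr_fun measurableSet_Ioi
    intro t ht
    have ht : 0 < t := ht
    simp only
    rw [← mul_assoc, ← ENNReal.ofReal_mul (by positivity), mul_comm t s,
      Real.mul_rpow hs.le ht.le, ← mul_assoc, ← Real.rpow_add hs]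
    simp
  rw [h1, lintegral_const_mul _ (by fun_prop), setLIntegral_scale_Ioi hs 0
    (F := fun t => ENNReal.ofReal (t ^ b) * F t ^ p) (by fun_prop), zero_mul,
    ← mul_assoc, ENNReal.mul_rpow_of_nonneg _ _ (by positivity)]
  congr 1
  rw [← ENNReal.ofReal_mul (by positivity), ENNReal.ofReal_rpow_of_nonneg (by positivity)
    (by positivity), ← Real.rpow_neg_one, ← Real.rpow_add hs, ← Real.rpow_mul hs.le]
  congr 2
  ring

/-- The averaging operator `ψ ↦ (1/t) ∫₀ᵗ ψ`. -/
noncomputable def T3 (ψ : ℝ → ℝ≥0∞) (t : ℝ) : ℝ≥0∞ := ∫⁻ s in Ioc (0:ℝ) 1, ψ (s * t)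

/-- The operator `ψ ↦ t⁻² ∫₀ᵗ τ ψ(τ) dτ`. -/
noncomputable def T2 (ψ : ℝ → ℝ≥0∞) (t : ℝ) : ℝ≥0∞ :=
  ∫⁻ s in Ioc (0:ℝ) 1, ENNReal.ofReal s * ψ (s * t)

/-- The operator `ψ ↦ ∫ₜ^∞ ψ(τ) dτ / τ`. -/
noncomputable def T1 (ψ : ℝ → ℝ≥0∞) (t : ℝ) : ℝ≥0∞ :=
  ∫⁻ s in Ioi (1:ℝ), ENNReal.ofReal s⁻¹ * ψ (s * t)

lemma measurable_T3 {ψ : ℝ → ℝ≥0∞} (h : Measurable ψ) : Measurable (T3 ψ) :=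
  Measurable.lintegral_prod_right' (f := fun z : ℝ × ℝ => ψ (z.2 * z.1)) (by fun_prop)

lemma measurable_T2 {ψ : ℝ → ℝ≥0∞} (h : Measurable ψ) : Measurable (T2 ψ) :=
  Measurable.lintegral_prod_right' (f := fun z : ℝ × ℝ => ENNReal.ofReal z.2 * ψ (z.2 * z.1))
    (by fun_prop)

lemma measurable_T1 {ψ : ℝ → ℝ≥0∞} (h : Measurable ψ) : Measurable (T1 ψ) :=
  Measurable.lintegral_prod_right' (f := fun z : ℝ × ℝ => ENNReal.ofReal z.2⁻¹ * ψ (z.2 * z.1))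
    (by fun_prop)

/-- Hardy's inequality with power weight. -/
lemma nrm_T3 {p b : ℝ} (hp : 1 < p) (hb : b + 1 < p) :
    ∃ C : ℝ≥0∞, C ≠ ∞ ∧ ∀ ψ : ℝ → ℝ≥0∞, Measurable ψ →
      nrm p (wt b) (T3 ψ) ≤ C * nrm p (wt b) ψ := by
  refine ⟨∫⁻ s in Ioc (0:ℝ) 1, ENNReal.ofReal (s ^ (-(b + 1) / p)), ?_, fun ψ hψ => ?_⟩
  · have h : IntervalIntegrable (fun s : ℝ => s ^ (-(b + 1) / p)) volume 0 1 := by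
      apply intervalIntegral.intervalIntegrable_rpow'
      rw [lt_div_iff₀ (by positivity)]; linarith
    rw [intervalIntegrable_iff_integrableOn_Ioc_of_le zero_le_one] at h
    exact h.lintegral_lt_top.ne
  · unfold T3
    refine (nrm_lintegral_le hp (H := fun s t => ψ (s * t))
      (by unfold Function.uncurry; fun_prop)).trans ?_
    rw [← lintegral_mul_const _ (by fun_prop)]
    apply le_of_eq
    apply setLIntegral_congr_fun measurableSet_Ioc
    intro s hs
    exact nrm_dilate hp hs.1 hψ

/-- The dual Hardy inequality with power weight. -/
lemma nrm_T1 {p b : ℝ} (hp : 1 < p) (hb : 0 < b + 1) :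
    ∃ C : ℝ≥0∞, C ≠ ∞ ∧ ∀ ψ : ℝ → ℝ≥0∞, Measurable ψ →
      nrm p (wt b) (T1 ψ) ≤ C * nrm p (wt b) ψ := by
  refine ⟨∫⁻ s in Ioi (1:ℝ), ENNReal.ofReal (s ^ (-1 + -(b + 1) / p)), ?_, fun ψ hψ => ?_⟩
  · have h : IntegrableOn (fun s : ℝ => s ^ (-1 + -(b + 1) / p)) (Ioi 1) := by
      apply integrableOn_Ioi_rpow_of_lt _ one_pos
      have : 0 < (b + 1) / p := by positivity
      rw [neg_div]; linarith
    exact h.lintegral_lt_top.ne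
  · unfold T1
    refine (nrm_lintegral_le hp (H := fun s t => ENNReal.ofReal s⁻¹ * ψ (s * t))
      (by unfold Function.uncurry; fun_prop)).trans ?_
    rw [← lintegral_mul_const _ (by fun_prop)]
    apply le_of_eq
    apply setLIntegral_congr_fun measurableSet_Ioi
    intro s hs
    have hs0 : 0 < s := lt_trans one_pos hs
    simp only
    rw [nrm_const_mul hp (by fun_prop), nrm_dilate hp hs0 hψ, ← mul_assoc,
      ← ENNReal.ofReal_mul (by positivity), Real.rpow_add hs0, Real.rpow_neg_one]

lemma T2_le_T3 (ψ : ℝ → ℝ≥0∞) (t : ℝ) : T2 ψ t ≤ T3 ψ t := by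
  unfold T2 T3
  apply setLIntegral_mono' measurableSet_Ioc
  intro s hs
  calc ENNReal.ofReal s * ψ (s * t) ≤ 1 * ψ (s * t) := by
        gcongr; simpa using hs.2
    _ = _ := one_mul _

/-- The sum of the three operators controlling the linearization error. -/
noncomputable def LL (ψ : ℝ → ℝ≥0∞) (t : ℝ) : ℝ≥0∞ := T1 ψ t + ψ t + T2 ψ t

lemma measurable_LL {ψ : ℝ → ℝ≥0∞} (h : Measurable ψ) : Measurable (LL ψ) :=
  ((measurable_T1 h).add h).add (measurable_T2 h)

lemma nrm_LL {p b : ℝ} (hp : 1 < p) (hb0 : 0 < b + 1) (hb : b + 1 < p) :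
    ∃ C : ℝ≥0∞, C ≠ ∞ ∧ ∀ ψ : ℝ → ℝ≥0∞, Measurable ψ →
      nrm p (wt b) (LL ψ) ≤ C * nrm p (wt b) ψ := by
  obtain ⟨C1, hC1, h1⟩ := nrm_T1 hp hb0
  obtain ⟨C3, hC3, h3⟩ := nrm_T3 hp hb
  refine ⟨C1 + 1 + C3, by simp [hC1, hC3], fun ψ hψ => ?_⟩
  unfold LL
  calc _ ≤ nrm p (wt b) (fun t => T1 ψ t + ψ t) + nrm p (wt b) (T2 ψ) :=
        nrm_add hp ((measurable_T1 hψ).add hψ) (measurable_T2 hψ)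
    _ ≤ nrm p (wt b) (T1 ψ) + nrm p (wt b) ψ + nrm p (wt b) (T3 ψ) := by
        gcongr
        · exact nrm_add hp (measurable_T1 hψ) hψ
        · exact nrm_mono hp (ae_of_all _ (T2_le_T3 ψ))
    _ ≤ C1 * nrm p (wt b) ψ + nrm p (wt b) ψ + C3 * nrm p (wt b) ψ := by
        gcongr
        · exact h1 ψ hψ
        · exact h3 ψ hψ
    _ = _ := by ring

lemma LL_mono {ψ χ : ℝ → ℝ≥0∞} (h : ∀ t, 0 < t → ψ t ≤ χ t) {t : ℝ} (ht : 0 < t) :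
    LL ψ t ≤ LL χ t := by
  unfold LL T1 T2
  gcongr ?_ + ?_ + ?_
  · apply setLIntegral_mono' measurableSet_Ioi
    intro s hs
    have hs0 : 0 < s := lt_trans one_pos hs
    gcongr; exact h _ (by positivity)
  · exact h t ht
  · apply setLIntegral_mono' measurableSet_Ioc
    intro s hs
    have hs0 : 0 < s := hs.1
    gcongr; exact h _ (by positivity)

lemma LL_add {ψ χ : ℝ → ℝ≥0∞} (hψ : Measurable ψ) (t : ℝ) :
    LL (fun t => ψ t + χ t) t = LL ψ t + LL χ t := by
  unfold LL T1 T2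
  simp_rw [mul_add]
  rw [lintegral_add_left (by fun_prop), lintegral_add_left (by fun_prop)]
  ring

lemma LL_inv (K : ℝ≥0∞) {t : ℝ} (ht : 0 < t) :
    LL (fun t => K * ENNReal.ofReal t⁻¹) t = 3 * (K * ENNReal.ofReal t⁻¹) := by
  have e1 : T1 (fun t => K * ENNReal.ofReal t⁻¹) t = K * ENNReal.ofReal t⁻¹ := by
    unfold T1
    have : ∀ s ∈ Ioi (1:ℝ), ENNReal.ofReal s⁻¹ * (K * ENNReal.ofReal (s * t)⁻¹) =
        (K * ENNReal.ofReal t⁻¹) * ENNReal.ofReal (s ^ (-2:ℝ)) := by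
      intro s hs
      have hs0 : 0 < s := lt_trans one_pos hs
      rw [mul_inv, ENNReal.ofReal_mul (by positivity), show (-2:ℝ) = -1 + -1 by norm_num,
        Real.rpow_add hs0, Real.rpow_neg_one, ENNReal.ofReal_mul (by positivity)]
      ring
    rw [setLIntegral_congr_fun measurableSet_Ioi this, lintegral_const_mul _ (by fun_prop),
      ← ofReal_integral_eq_lintegral_ofReal, integral_Ioi_rpow_of_lt (by norm_num) one_pos]
    · norm_num
    · exact integrableOn_Ioi_rpow_of_lt (by norm_num) one_pos
    · filter_upwards [ae_restrict_mem measurableSet_Ioi] with s hs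
      have hs0 : (0:ℝ) < s := lt_trans one_pos hs
      simp only [Pi.zero_apply]; positivity
  have e2 : T2 (fun t => K * ENNReal.ofReal t⁻¹) t = K * ENNReal.ofReal t⁻¹ := by
    unfold T2
    have : ∀ s ∈ Ioc (0:ℝ) 1, ENNReal.ofReal s * (K * ENNReal.ofReal (s * t)⁻¹) =
        K * ENNReal.ofReal t⁻¹ := by
      intro s hs
      have hs0 : 0 < s := hs.1
      rw [mul_left_comm, ← ENNReal.ofReal_mul hs0.le]
      congr 2
      field_simp
    rw [setLIntegral_congr_fun measurableSet_Ioc this]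
    simp
  unfold LL
  rw [e1, e2]; ring

/-- A function dominated by `2γ + ε·LL φ` is controlled by `γ` in weighted `L^p`, provided it is
`O(1/t)`: the iterates of `ε·LL` applied to `1/t` tend to zero because `LL (1/t) = 3/t`, so that no
finiteness of the weighted norm of `φ` has to be known beforehand. -/
lemma absorb {p b : ℝ} (hp : 1 < p) {ε C K : ℝ≥0∞}
    (hC : ∀ ψ : ℝ → ℝ≥0∞, Measurable ψ → nrm p (wt b) (LL ψ) ≤ C * nrm p (wt b) ψ)
    (h1 : ε * C ≤ 2⁻¹) (h3 : ε * 3 ≤ 2⁻¹) (hK : K ≠ ∞) {φ γ : ℝ → ℝ≥0∞}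
    (hγ : Measurable γ)
    (hφK : ∀ t, 0 < t → φ t ≤ K * ENNReal.ofReal t⁻¹)
    (hφ : ∀ t, 0 < t → φ t ≤ 2 * γ t + ε * LL φ t) :
    nrm p (wt b) φ ≤ 4 * nrm p (wt b) γ := by
  have step : ∀ n : ℕ, ∃ G : ℝ → ℝ≥0∞, Measurable G ∧ nrm p (wt b) G ≤ 4 * nrm p (wt b) γ ∧
      ∀ t, 0 < t → φ t ≤ G t + (2⁻¹ ^ n * K) * ENNReal.ofReal t⁻¹ := by
    intro n
    induction n with
    | zero =>
      refine ⟨fun _ => 0, measurable_const, ?_, by simpa using hφK⟩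
      have : (0:ℝ) < p := by positivity
      simp [nrm, ENNReal.zero_rpow_of_pos this, this]
    | succ n ih =>
      obtain ⟨G, hG, hGn, hGφ⟩ := ih
      refine ⟨fun t => 2 * γ t + ε * LL G t,
        (hγ.const_mul _).add ((measurable_LL hG).const_mul _), ?_, ?_⟩
      · calc _ ≤ nrm p (wt b) (fun t => 2 * γ t) + nrm p (wt b) (fun t => ε * LL G t) :=
              nrm_add hp (hγ.const_mul _) ((measurable_LL hG).const_mul _)
          _ = 2 * nrm p (wt b) γ + ε * nrm p (wt b) (LL G) := by
              rw [nrm_const_mul hp hγ, nrm_const_mul hp (measurable_LL hG)]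
          _ ≤ 2 * nrm p (wt b) γ + ε * (C * (4 * nrm p (wt b) γ)) := by
              gcongr; exact (hC G hG).trans (by gcongr)
          _ = 2 * nrm p (wt b) γ + (ε * C) * (4 * nrm p (wt b) γ) := by ring
          _ ≤ 2 * nrm p (wt b) γ + 2⁻¹ * (4 * nrm p (wt b) γ) := by gcongr
          _ = 4 * nrm p (wt b) γ := by
              rw [show (4:ℝ≥0∞) = 2 * 2 by norm_num, mul_assoc, ← mul_assoc 2⁻¹,
                ENNReal.inv_mul_cancel (by simp) (by simp)]
              ring
      · intro t ht
        calc φ t ≤ 2 * γ t + ε * LL φ t := hφ t ht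
          _ ≤ 2 * γ t + ε * LL (fun t => G t + (2⁻¹ ^ n * K) * ENNReal.ofReal t⁻¹) t := by
              gcongr; exact LL_mono hGφ ht
          _ = 2 * γ t + ε * LL G t + (ε * 3) * (2⁻¹ ^ n * K * ENNReal.ofReal t⁻¹) := by
              rw [LL_add hG, LL_inv _ ht]; ring
          _ ≤ 2 * γ t + ε * LL G t + 2⁻¹ * (2⁻¹ ^ n * K * ENNReal.ofReal t⁻¹) := by gcongr
          _ = _ := by rw [pow_succ]; ring
  choose G hG hGn hGφ using step
  have hp0 : 0 < p := by positivity
  have hlim : ∀ t, 0 < t → φ t ≤ liminf (fun n => G n t) atTop := by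
    intro t ht
    have hz : Tendsto (fun n : ℕ => (2⁻¹ ^ n * K) * ENNReal.ofReal t⁻¹) atTop (𝓝 0) := by
      have h0 : Tendsto (fun n : ℕ => (2⁻¹ : ℝ≥0∞) ^ n) atTop (𝓝 0) :=
        ENNReal.tendsto_pow_atTop_nhds_zero_of_lt_one (by simp)
      have := ENNReal.Tendsto.mul_const h0 (b := K * ENNReal.ofReal t⁻¹)
        (Or.inr (ENNReal.mul_ne_top hK (by simp)))
      simpa [mul_assoc] using this
    by_contra! hlt
    obtain ⟨r, hr1, hr2⟩ := exists_between hlt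
    have hφr : 0 < φ t - r := tsub_pos_of_lt hr2
    obtain ⟨n, hn1, hn2⟩ := ((frequently_lt_of_liminf_lt (by isBoundedDefault) hr1).and_eventually
      (hz.eventually (gt_mem_nhds hφr))).exists
    have hrt : r ≠ ∞ := (lt_of_lt_of_le hr2 le_top).ne
    have hφt : φ t ≠ ∞ := ne_top_of_le_ne_top (ENNReal.mul_ne_top hK (by simp)) (hφK t ht)
    have := hGφ n t ht
    have h2 : G n t + 2⁻¹ ^ n * K * ENNReal.ofReal t⁻¹ < r + (φ t - r) :=
      ENNReal.add_lt_add hn1 hn2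
    rw [add_tsub_cancel_of_le hr2.le] at h2
    exact absurd (this.trans_lt h2) (lt_irrefl _)
  calc nrm p (wt b) φ ≤ nrm p (wt b) (fun t => liminf (fun n => G n t) atTop) := by
        apply nrm_mono hp
        filter_upwards [ae_wt] with t ht using hlim t ht
    _ ≤ 4 * nrm p (wt b) γ := by
        unfold nrm
        rw [one_div, ENNReal.rpow_inv_le_iff hp0]
        have : ∀ t, liminf (fun n => G n t) atTop ^ p = liminf (fun n => G n t ^ p) atTop := by
          intro t
          exact (ENNReal.orderIsoRpow p hp0).liminf_apply
        simp_rw [this]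
        refine (lintegral_liminf_le fun n => (hG n).pow_const p).trans ?_
        refine (liminf_le_liminf (v := fun _ => (4 * nrm p (wt b) γ) ^ p)
          (Eventually.of_forall fun n => ?_)).trans ?_
        · rw [← nrm_rpow hp]
          exact ENNReal.rpow_le_rpow (hGn n) hp0.le
        · simp [nrm]

/-! ### The Cauchy transform of `A` in the upper half-plane -/

lemma ftc_real {q q' : ℝ → ℝ} (hL : LocallyLipschitz q) (hd : ∀ᵐ y, HasDerivAt q (q' y) y)
    (hi : Integrable q') (h0 : Tendsto q atTop (𝓝 0)) (h1 : Tendsto q atBot (𝓝 0)) :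
    ∫ y, q' y = 0 := by
  have hI : ∀ R : ℝ, ∫ y in (-R)..R, q' y = q R - q (-R) := by
    intro R
    obtain ⟨K, hK⟩ := (hL.locallyLipschitzOn (s := uIcc (-R) R)).exists_lipschitzOnWith_of_compact
      isCompact_uIcc
    rw [← hK.absolutelyContinuousOnInterval.integral_deriv_eq_sub]
    apply intervalIntegral.integral_congr_ae
    filter_upwards [hd] with y hy _
    exact hy.deriv.symm
  have l1 := intervalIntegral_tendsto_integral hi tendsto_neg_atTop_atBot tendsto_id
  simp only [id, hI] at l1
  have l2 : Tendsto (fun R : ℝ => q R - q (-R)) atTop (𝓝 (0 - 0)) :=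
    h0.sub (h1.comp tendsto_neg_atTop_atBot)
  rw [sub_zero] at l2
  exact tendsto_nhds_unique l1 l2

/-- The integral over `ℝ` of the a.e. derivative of a locally Lipschitz function vanishing at
infinity is zero. -/
lemma ftc {q q' : ℝ → ℂ} (hL : LocallyLipschitz q) (hd : ∀ᵐ y, HasDerivAt q (q' y) y)
    (hi : Integrable q') (h0 : Tendsto q atTop (𝓝 0)) (h1 : Tendsto q atBot (𝓝 0)) :
    ∫ y, q' y = 0 := by
  have key : ∀ L : ℂ →L[ℝ] ℝ, ∫ y, L (q' y) = 0 := by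
    intro L
    apply ftc_real (q := fun y => L (q y)) (L.lipschitz.locallyLipschitz.comp hL) _
      (L.integrable_comp hi)
    · simpa [Function.comp_def] using (L.continuous.tendsto 0).comp h0
    · simpa [Function.comp_def] using (L.continuous.tendsto 0).comp h1
    · filter_upwards [hd] with y hy
      exact L.hasFDerivAt.comp_hasDerivAt y hy
  apply Complex.ext
  · rw [← Complex.reCLM_apply, ← Complex.reCLM.integral_comp_comm hi, key]; simp
  · rw [← Complex.imCLM_apply, ← Complex.imCLM.integral_comp_comm hi, key]; simp

lemma ll_mul {f g : ℝ → ℂ} (hf : LocallyLipschitz f) (hg : LocallyLipschitz g) :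
    LocallyLipschitz fun y => f y * g y := by
  have : ContDiff ℝ 1 fun z : ℂ × ℂ => z.1 * z.2 := contDiff_fst.mul contDiff_snd
  exact this.locallyLipschitz.comp (hf.prodMk hg)

lemma ll_inv {f : ℝ → ℂ} (hf : LocallyLipschitz f) (h0 : ∀ y, f y ≠ 0) :
    LocallyLipschitz fun y => (f y)⁻¹ := by
  intro y
  obtain ⟨K, t, ht, hK⟩ := hf y
  obtain ⟨K', t', ht', hK'⟩ := (contDiffAt_inv ℂ (n := 1) (h0 y)).exists_lipschitzOnWith
  refine ⟨K' * K, t ∩ f ⁻¹' t', inter_mem ht (hf.continuous.continuousAt ht'), ?_⟩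
  exact hK'.comp (hK.mono inter_subset_left) (fun z hz => hz.2)

lemma ll_smooth {f : ℝ → ℂ} (hf : ContDiff ℝ 1 f) : LocallyLipschitz f := hf.locallyLipschitz

lemma ll_ofReal {A : ℝ → ℝ} (hA : LocallyLipschitz A) : LocallyLipschitz fun y => (A y : ℂ) :=
  Complex.isometry_ofReal.lipschitz.locallyLipschitz.comp hA

/-- Cauchy integral `(1/π) ∫ A(y)/(y-w) dy`. -/
noncomputable def G0 (A : ℝ → ℝ) (w : ℂ) : ℂ :=
  (Real.pi : ℂ)⁻¹ * ∫ y : ℝ, (A y : ℂ) / ((y : ℂ) - w) ^ 1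

/-- First derivative of `G0 A`. Its imaginary part is the Poisson extension of `A'`. -/
noncomputable def G1 (A : ℝ → ℝ) (w : ℂ) : ℂ :=
  (Real.pi : ℂ)⁻¹ * ∫ y : ℝ, (A y : ℂ) / ((y : ℂ) - w) ^ 2

/-- Second derivative of `G0 A`. It plays the role of the function `F` for the flat domain. -/
noncomputable def G2 (A : ℝ → ℝ) (w : ℂ) : ℂ :=
  (Real.pi : ℂ)⁻¹ * (2 * ∫ y : ℝ, (A y : ℂ) / ((y : ℂ) - w) ^ 3)

lemma im_le_norm_sub (y : ℝ) (w : ℂ) (_hw : 0 < w.im) : w.im ≤ ‖(y : ℂ) - w‖ := by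
  have := Complex.abs_im_le_norm ((y : ℂ) - w)
  simp only [Complex.sub_im, Complex.ofReal_im, zero_sub, abs_neg] at this
  exact (le_abs_self _).trans this

lemma sub_ne {y : ℝ} {w : ℂ} (hw : 0 < w.im) : (y : ℂ) - w ≠ 0 := by
  have := im_le_norm_sub y w hw
  intro h
  rw [h, norm_zero] at this
  linarith

lemma hasDerivAt_cauchy {A : ℝ → ℝ} (hAc : Continuous A) (hAs : HasCompactSupport A) (n : ℕ)
    (hn : 0 < n) {w : ℂ} (hw : 0 < w.im) :
    HasDerivAt (fun w => ∫ y : ℝ, (A y : ℂ) / ((y : ℂ) - w) ^ n)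
      (n * ∫ y : ℝ, (A y : ℂ) / ((y : ℂ) - w) ^ (n + 1)) w := by
  have hAi : Integrable A := hAc.integrable_of_hasCompactSupport hAs
  have hs : Metric.ball w (w.im / 2) ∈ 𝓝 w := Metric.ball_mem_nhds _ (by positivity)
  have him : ∀ z ∈ Metric.ball w (w.im / 2), w.im / 2 < z.im := by
    intro z hz
    rw [Metric.mem_ball, dist_eq_norm] at hz
    have := (Complex.abs_im_le_norm (z - w)).trans_lt hz
    rw [Complex.sub_im, abs_lt] at this
    linarith
  have hcont : ∀ (z : ℂ) (k : ℕ), 0 < z.im →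
      Continuous fun y : ℝ => (A y : ℂ) / ((y : ℂ) - z) ^ k := by
    intro z k hz
    refine Continuous.div (by fun_prop) (by fun_prop) fun y => pow_ne_zero _ (sub_ne hz)
  have hbd : ∀ (z : ℂ) (k : ℕ) (r : ℝ), 0 < r → r ≤ z.im → ∀ y : ℝ,
      ‖(A y : ℂ) / ((y : ℂ) - z) ^ k‖ ≤ |A y| * (r ^ k)⁻¹ := by
    intro z k r hr hz y
    rw [norm_div, norm_pow, Complex.norm_real, Real.norm_eq_abs, div_eq_mul_inv]
    gcongr
    exact hz.trans (im_le_norm_sub y z (hr.trans_le hz))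
  have := hasDerivAt_integral_of_dominated_loc_of_deriv_le (μ := volume) (x₀ := w) (s := Metric.ball w (w.im / 2))
    (F := fun w (y : ℝ) => (A y : ℂ) / ((y : ℂ) - w) ^ n)
    (F' := fun w (y : ℝ) => n * ((A y : ℂ) / ((y : ℂ) - w) ^ (n + 1)))
    (bound := fun y => n * (|A y| * ((w.im / 2) ^ (n + 1))⁻¹)) hs ?_ ?_ ?_ ?_ ?_ ?_
  · have h2 := this.2
    rwa [integral_const_mul] at h2
  · filter_upwards [hs] with z hz
    exact (hcont z n (by have := him z hz; linarith)).aestronglyMeasurable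
  · refine (hAi.abs.mul_const ((w.im ^ n)⁻¹)).mono' (hcont w n hw).aestronglyMeasurable ?_
    exact ae_of_all _ (hbd w n _ hw le_rfl)
  · exact ((hcont w (n + 1) hw).const_smul (n : ℂ)).aestronglyMeasurable
  · refine ae_of_all _ fun y z hz => ?_
    rw [norm_mul, Complex.norm_natCast]
    gcongr
    exact hbd z (n + 1) _ (by positivity) (him z hz).le y
  · exact (hAi.abs.mul_const _).const_mul _
  · refine ae_of_all _ fun y z hz => ?_
    have hz0 : 0 < z.im := by have := him z hz; linarith
    have hne := sub_ne (y := y) hz0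
    have h1 : HasDerivAt (fun z : ℂ => ((y : ℂ) - z) ^ n) (n * ((y : ℂ) - z) ^ (n - 1) * (-1)) z := by
      have := ((hasDerivAt_id z).const_sub (y : ℂ)).fun_pow n
      simpa using this
    have h2 := (h1.inv (pow_ne_zero n hne)).const_mul (A y : ℂ)
    have h3 : HasDerivAt (fun z : ℂ => (A y : ℂ) / ((y : ℂ) - z) ^ n)
        ((A y : ℂ) * (-(n * ((y : ℂ) - z) ^ (n - 1) * (-1)) / (((y : ℂ) - z) ^ n) ^ 2)) z := h2
    refine h3.congr_deriv ?_
    obtain ⟨m, rfl⟩ : ∃ m, n = m + 1 := ⟨n - 1, by omega⟩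
    field_simp
    simp only [add_tsub_cancel_right]
    ring

section Fixed
variable {A : ℝ → ℝ}

lemma hasDerivAt_G0 (hAc : Continuous A) (hAs : HasCompactSupport A) {w : ℂ} (hw : 0 < w.im) :
    HasDerivAt (G0 A) (G1 A w) w := by
  have := (hasDerivAt_cauchy hAc hAs 1 one_pos hw).const_mul ((Real.pi : ℂ)⁻¹)
  unfold G0 G1
  simpa using this

lemma hasDerivAt_G1 (hAc : Continuous A) (hAs : HasCompactSupport A) {w : ℂ} (hw : 0 < w.im) :
    HasDerivAt (G1 A) (G2 A w) w := by
  have := (hasDerivAt_cauchy hAc hAs 2 two_pos hw).const_mul ((Real.pi : ℂ)⁻¹)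
  unfold G1 G2
  simpa using this

lemma continuousOn_G2 (hAc : Continuous A) (hAs : HasCompactSupport A) :
    ContinuousOn (G2 A) {w | 0 < w.im} := by
  intro w hw
  have := ((hasDerivAt_cauchy hAc hAs 3 three_pos hw).const_mul 2).const_mul ((Real.pi : ℂ)⁻¹)
  unfold G2
  exact this.continuousAt.continuousWithinAt

lemma cauchy_bound (hAc : Continuous A) (hAs : HasCompactSupport A) (k : ℕ) {t : ℝ} (ht : 0 < t)
    (x : ℝ) :
    ‖∫ y : ℝ, (A y : ℂ) / ((y : ℂ) - (x + t * Complex.I)) ^ k‖ ≤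
      (∫ y, |A y|) * (t ^ k)⁻¹ := by
  have hAi : Integrable A := hAc.integrable_of_hasCompactSupport hAs
  rw [← integral_mul_const]
  refine norm_integral_le_of_norm_le (hAi.abs.mul_const _) (ae_of_all _ fun y => ?_)
  rw [norm_div, norm_pow, Complex.norm_real, Real.norm_eq_abs, div_eq_mul_inv]
  gcongr
  have := im_le_norm_sub y (x + t * Complex.I) (by simpa using ht)
  simpa using this

lemma G_bound (hAc : Continuous A) (hAs : HasCompactSupport A) {t : ℝ} (ht : 0 < t) :
    ∃ M : ℝ, ∀ x : ℝ, ‖G0 A (x + t * Complex.I)‖ ≤ M ∧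
    ‖G1 A (x + t * Complex.I)‖ ≤ M ∧ ‖G2 A (x + t * Complex.I)‖ ≤ M := by
  set J := ∫ y, |A y|
  have hJ : 0 ≤ J := integral_nonneg fun y => abs_nonneg _
  have hpi : ‖(Real.pi : ℂ)⁻¹‖ ≤ 1 := by
    rw [norm_inv, Complex.norm_real, Real.norm_eq_abs, abs_of_pos Real.pi_pos]
    exact inv_le_one_of_one_le₀ (by linarith [Real.pi_gt_three])
  refine ⟨J * (t ^ 1)⁻¹ + J * (t ^ 2)⁻¹ + 2 * (J * (t ^ 3)⁻¹), fun x => ?_⟩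
  have b1 := cauchy_bound hAc hAs 1 ht x
  have b2 := cauchy_bound hAc hAs 2 ht x
  have b3 := cauchy_bound hAc hAs 3 ht x
  have p1 : 0 ≤ J * (t ^ 1)⁻¹ := by positivity
  have p2 : 0 ≤ J * (t ^ 2)⁻¹ := by positivity
  have p3 : 0 ≤ J * (t ^ 3)⁻¹ := by positivity
  unfold G0 G1 G2
  simp only [norm_mul, Complex.norm_ofNat]
  refine ⟨?_, ?_, ?_⟩
  · refine (mul_le_mul hpi b1 (norm_nonneg _) zero_le_one).trans ?_; linarith
  · refine (mul_le_mul hpi b2 (norm_nonneg _) zero_le_one).trans ?_; linarith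
  · refine (mul_le_mul hpi (mul_le_mul_of_nonneg_left b3 zero_le_two) (by positivity)
      zero_le_one).trans ?_; linarith

lemma tendsto_of_compactSupport_mul (hAs : HasCompactSupport A) (k : ℝ → ℂ) (l : Filter ℝ)
    (hl : l ≤ cocompact ℝ) : Tendsto (fun y => (A y : ℂ) * k y) l (𝓝 0) := by
  have : ∀ᶠ y in l, A y = 0 := by
    apply hl
    have := hAs.isCompact.compl_mem_cocompact
    filter_upwards [this] with y hy
    exact image_eq_zero_of_notMem_tsupport hy
  apply tendsto_const_nhds.congr'
  filter_upwards [this] with y hy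
  simp [hy]

end Fixed

lemma integrable_deriv {A : ℝ → ℝ} {K : NNReal} (hA : LipschitzWith K A)
    (hAs : HasCompactSupport A) : Integrable (deriv A) := by
  have h : IntegrableOn (deriv A) (tsupport A) := by
    refine Measure.integrableOn_of_bounded (M := K) hAs.isCompact.measure_lt_top.ne
      (measurable_deriv A).aestronglyMeasurable ?_
    exact ae_of_all _ fun x => norm_deriv_le_of_lipschitz hA
  rw [integrableOn_iff_integrable_of_support_subset] at h
  · exact h
  · exact support_deriv_subset

/-- Integration by parts in the definition of `G2`. -/
lemma G2_eq {A : ℝ → ℝ} {K : NNReal} (hA : LipschitzWith K A) (hAs : HasCompactSupport A)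
    {w : ℂ} (hw : 0 < w.im) :
    G2 A w = (Real.pi : ℂ)⁻¹ * ∫ y : ℝ, ((deriv A y : ℝ) : ℂ) / ((y : ℂ) - w) ^ 2 := by
  have hAc := hA.continuous
  have hAi : Integrable A := hAc.integrable_of_hasCompactSupport hAs
  have hkc : ∀ k : ℕ, Continuous fun y : ℝ => (((y : ℂ) - w) ^ k)⁻¹ := fun k =>
    Continuous.inv₀ (by fun_prop) fun y => pow_ne_zero _ (sub_ne hw)
  have hkb : ∀ k : ℕ, ∀ y : ℝ, ‖(((y : ℂ) - w) ^ k)⁻¹‖ ≤ (w.im ^ k)⁻¹ := by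
    intro k y
    rw [norm_inv, norm_pow]
    gcongr
    exact im_le_norm_sub y w hw
  have i1 : Integrable fun y : ℝ => ((deriv A y : ℝ) : ℂ) * (((y : ℂ) - w) ^ 2)⁻¹ :=
    (integrable_deriv hA hAs).ofReal.mul_bdd (hkc 2).aestronglyMeasurable (ae_of_all _ (hkb 2))
  have i2 : Integrable fun y : ℝ => (A y : ℂ) * (((y : ℂ) - w) ^ 3)⁻¹ :=
    hAi.ofReal.mul_bdd (hkc 3).aestronglyMeasurable (ae_of_all _ (hkb 3))
  have h := ftc (q := fun y : ℝ => (A y : ℂ) * (((y : ℂ) - w) ^ 2)⁻¹)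
    (q' := fun y : ℝ => ((deriv A y : ℝ) : ℂ) * (((y : ℂ) - w) ^ 2)⁻¹ -
      2 * ((A y : ℂ) * (((y : ℂ) - w) ^ 3)⁻¹)) ?_ ?_ (i1.sub (i2.const_mul 2))
    (tendsto_of_compactSupport_mul hAs _ _ atTop_le_cocompact)
    (tendsto_of_compactSupport_mul hAs _ _ atBot_le_cocompact)
  · rw [integral_sub i1 (i2.const_mul 2), integral_const_mul, sub_eq_zero] at h
    unfold G2
    simp_rw [div_eq_mul_inv]
    rw [h]
  · refine ll_mul (ll_ofReal hA.locallyLipschitz) (ll_inv (ll_smooth ?_)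
      fun y => pow_ne_zero _ (sub_ne hw))
    exact (Complex.ofRealCLM.contDiff.sub contDiff_const).pow 2
  · filter_upwards [hA.ae_differentiableAt_real] with y hy
    have hne := sub_ne (y := y) hw
    have h1 : HasDerivAt (fun y : ℝ => (((y : ℂ) - w) ^ 2)⁻¹)
        (-(2 * ((y : ℂ) - w)) / (((y : ℂ) - w) ^ 2) ^ 2) y := by
      have := (((Complex.ofRealCLM.hasDerivAt (x := y)).sub_const w).fun_pow 2).fun_inv
        (pow_ne_zero 2 hne)
      simpa using this
    refine ((hy.hasDerivAt.ofReal_comp).fun_mul h1).congr_deriv ?_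
    field_simp
    ring

/-! ### The graph kernel compared with the flat kernel -/

lemma lint_abs (g : ℝ → ℝ≥0∞) : ∫⁻ v, g |v| = 2 * ∫⁻ v in Ioi (0:ℝ), g v := by
  have h1 : ∫⁻ v in Ioi (0:ℝ), g |v| = ∫⁻ v in Ioi (0:ℝ), g v :=
    setLIntegral_congr_fun measurableSet_Ioi fun v hv => by
      simp only [abs_of_pos (mem_Ioi.mp hv)]
  have h2 : ∫⁻ v in Iio (0:ℝ), g |v| = ∫⁻ v in Ioi (0:ℝ), g |v| := by
    rw [← (Measure.measurePreserving_neg (volume : Measure ℝ)).setLIntegral_comp_preimage_emb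
      (MeasurableEquiv.neg ℝ).measurableEmbedding (fun v => g |v|) (Ioi 0)]
    simp
  rw [← lintegral_add_compl _ (measurableSet_Ioi (a := (0:ℝ))), compl_Ioi,
    ← setLIntegral_congr (Iio_ae_eq_Iic (a := (0:ℝ))), h2, h1, two_mul]

lemma lint_abs_rpow {t r : ℝ} (ht : 0 < t) (hr : 1 < r) :
    ∫⁻ v : ℝ, ENNReal.ofReal ((|v| + t) ^ (-r)) = ENNReal.ofReal (2 * (t ^ (1 - r) / (r - 1))) := by
  rw [lint_abs (fun v => ENNReal.ofReal ((v + t) ^ (-r)))]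
  have h1 : ∫⁻ v in Ioi (0:ℝ), ENNReal.ofReal ((v + t) ^ (-r)) =
      ∫⁻ v in Ioi t, ENNReal.ofReal (v ^ (-r)) := by
    rw [← (measurePreserving_add_right (volume : Measure ℝ) t).setLIntegral_comp_preimage_emb
      (MeasurableEquiv.addRight t).measurableEmbedding (fun v => ENNReal.ofReal (v ^ (-r))) (Ioi t)]
    simp
  rw [h1, ← ofReal_integral_eq_lintegral_ofReal (integrableOn_Ioi_rpow_of_lt (by linarith) ht),
    integral_Ioi_rpow_of_lt (by linarith) ht, ENNReal.ofReal_mul (by norm_num)]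
  · simp only [ENNReal.ofReal_ofNat]
    congr 2
    rw [neg_add_eq_sub, ← neg_div_neg_eq, neg_neg, neg_sub]
  · filter_upwards [ae_restrict_mem measurableSet_Ioi] with v hv
    exact Real.rpow_nonneg (ht.trans hv).le _

lemma lint_D2 {t : ℝ} (ht : 0 < t) :
    ∫⁻ v : ℝ, ENNReal.ofReal (((|v| + t) ^ 2)⁻¹) = ENNReal.ofReal (2 * t⁻¹) := by
  have := lint_abs_rpow ht (r := 2) (by norm_num)
  convert this using 3 with v
  · rw [Real.rpow_neg (by positivity), ← Real.rpow_natCast]; norm_num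
  · norm_num [Real.rpow_neg_one]

lemma lint_D3 {t : ℝ} (ht : 0 < t) :
    ∫⁻ v : ℝ, ENNReal.ofReal (((|v| + t) ^ 3)⁻¹) = ENNReal.ofReal ((t ^ 2)⁻¹) := by
  have := lint_abs_rpow ht (r := 3) (by norm_num)
  convert this using 3 with v
  · rw [Real.rpow_neg (by positivity), ← Real.rpow_natCast]; norm_num
  · rw [show (1 - 3 : ℝ) = -2 by norm_num, Real.rpow_neg ht.le, ← Real.rpow_natCast]
    push_cast; ring

lemma integrable_D2 {t : ℝ} (ht : 0 < t) (x : ℝ) :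
    Integrable fun y : ℝ => ((|y - x| + t) ^ 2)⁻¹ := by
  have h : Integrable fun v : ℝ => ((|v| + t) ^ 2)⁻¹ := by
    refine ⟨by fun_prop, ?_⟩
    rw [hasFiniteIntegral_iff_ofReal (ae_of_all _ fun v => by positivity), lint_D2 ht]
    exact ENNReal.ofReal_lt_top
  exact h.comp_sub_right x

/-- The difference between the point of the graph of `A` above `y` and the point at height `t` over
the graph above `x`. -/
noncomputable def zt (A : ℝ → ℝ) (x t y : ℝ) : ℂ :=
  (y : ℂ) + (A y : ℂ) * Complex.I - ((x : ℂ) + ((A x + t : ℝ) : ℂ) * Complex.I)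

/-- The flat analogue of `zt`. -/
noncomputable def z0 (x t y : ℝ) : ℂ := (y : ℂ) - ((x : ℂ) + (t : ℂ) * Complex.I)

lemma zt_zero (x t y : ℝ) : zt (fun _ => 0) x t y = z0 x t y := by
  simp [zt, z0]

lemma abs_sub_le_of_lip {A : ℝ → ℝ} {δ : ℝ} (hδ : 0 < δ) (hA : LipschitzWith (Real.toNNReal δ) A)
    (x y : ℝ) : |A y - A x| ≤ δ * |y - x| := by
  have := hA.dist_le_mul y x
  rwa [Real.coe_toNNReal _ hδ.le, Real.dist_eq, Real.dist_eq] at this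

lemma abs_deriv_le {A : ℝ → ℝ} {δ : ℝ} (hδ : 0 < δ) (hA : LipschitzWith (Real.toNNReal δ) A)
    (x : ℝ) : |deriv A x| ≤ δ := by
  have := norm_deriv_le_of_lipschitz hA (x₀ := x)
  rwa [Real.coe_toNNReal _ hδ.le] at this

/-- For small slope, points above and on the graph are as far apart as their parameters. -/
lemma D_le_zt {A : ℝ → ℝ} {δ : ℝ} (hδ : 0 < δ) (hδ1 : δ ≤ 1 / 2)
    (hA : LipschitzWith (Real.toNNReal δ) A) {t : ℝ} (ht : 0 < t) (x y : ℝ) :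
    |y - x| + t ≤ 3 * ‖zt A x t y‖ := by
  have h1 := Complex.abs_re_le_norm (zt A x t y)
  have h2 := Complex.abs_im_le_norm (zt A x t y)
  have h3 := abs_sub_le_of_lip hδ hA x y
  simp only [zt, Complex.sub_re, Complex.sub_im, Complex.add_re, Complex.add_im, Complex.mul_re,
    Complex.mul_im, Complex.ofReal_re, Complex.ofReal_im, Complex.I_re, Complex.I_im] at h1 h2
  simp only [mul_zero, sub_zero, add_zero, mul_one, zero_add] at h1 h2
  change _ ≤ 3 * ‖(y : ℂ) + (A y : ℂ) * Complex.I - ((x : ℂ) + ((A x + t : ℝ) : ℂ) * Complex.I)‖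
  have h4 : δ * |y - x| ≤ 1 / 2 * |y - x| := by gcongr
  have h5 := neg_abs_le (A y - (A x + t))
  have h6 := le_abs_self (A y - A x)
  linarith

lemma D_le_z0 {t : ℝ} (ht : 0 < t) (x y : ℝ) : |y - x| + t ≤ 3 * ‖z0 x t y‖ := by
  rw [← zt_zero]
  apply D_le_zt (δ := 1 / 2) (by norm_num) le_rfl _ ht
  exact (LipschitzWith.const (0:ℝ)).weaken (by positivity)

lemma D_pos {t : ℝ} (ht : 0 < t) (x y : ℝ) : 0 < |y - x| + t := by positivity

lemma inv_norm_le {z : ℂ} {D : ℝ} (hD : 0 < D) (h : D ≤ 3 * ‖z‖) : ‖z⁻¹‖ ≤ 3 * D⁻¹ := by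
  rw [norm_inv, ← div_eq_mul_inv, inv_le_comm₀ (by linarith) (by positivity), inv_div,
    div_le_iff₀ (by norm_num)]
  linarith

lemma ne_of_D {z : ℂ} {D : ℝ} (hD : 0 < D) (h : D ≤ 3 * ‖z‖) : z ≠ 0 := by
  rintro rfl; simp at h; linarith

/-- The difference of the kernels `1/ζ²` for the graph and for the line. -/
noncomputable def mk (A : ℝ → ℝ) (x t y : ℝ) : ℂ := ((zt A x t y)⁻¹) ^ 2 - ((z0 x t y)⁻¹) ^ 2

/-- The a.e. derivative of `mk` in the variable `y`. -/
noncomputable def mk' (A : ℝ → ℝ) (x t y : ℝ) : ℂ :=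
  -2 * (1 + Complex.ofReal (deriv A y) * Complex.I) * ((zt A x t y)⁻¹) ^ 3 +
    2 * ((z0 x t y)⁻¹) ^ 3

section Bd
variable {A : ℝ → ℝ} {δ t : ℝ}

lemma inv_sub_le (hδ : 0 < δ) (hδ1 : δ ≤ 1 / 2) (hA : LipschitzWith (Real.toNNReal δ) A)
    (ht : 0 < t) (x y : ℝ) :
    ‖(zt A x t y)⁻¹ - (z0 x t y)⁻¹‖ ≤ 9 * δ * (|y - x| + t)⁻¹ := by
  have hD := D_pos ht x y
  have a1 := D_le_zt hδ hδ1 hA ht x y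
  have a2 := D_le_z0 ht x y
  set D := |y - x| + t
  have e : (zt A x t y)⁻¹ - (z0 x t y)⁻¹ =
      -((A y - A x : ℝ) : ℂ) * Complex.I * ((zt A x t y)⁻¹ * (z0 x t y)⁻¹) := by
    have n1 := ne_of_D hD a1
    have n2 := ne_of_D hD a2
    field_simp
    simp only [zt, z0]; push_cast; ring
  rw [e, norm_mul, norm_mul, norm_mul, norm_neg, Complex.norm_real, Complex.norm_I,
    Real.norm_eq_abs, mul_one]
  calc |A y - A x| * (‖(zt A x t y)⁻¹‖ * ‖(z0 x t y)⁻¹‖) ≤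
        (δ * D) * ((3 * D⁻¹) * (3 * D⁻¹)) := by
        gcongr
        · refine (abs_sub_le_of_lip hδ hA x y).trans ?_
          gcongr
          simp only [D]; linarith
        · exact inv_norm_le hD a1
        · exact inv_norm_le hD a2
    _ = 9 * δ * D⁻¹ := by field_simp; ring

lemma mk_bound (hδ : 0 < δ) (hδ1 : δ ≤ 1 / 2) (hA : LipschitzWith (Real.toNNReal δ) A)
    (ht : 0 < t) (x y : ℝ) : ‖mk A x t y‖ ≤ 54 * δ * ((|y - x| + t) ^ 2)⁻¹ := by
  have hD := D_pos ht x y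
  have a1 := inv_norm_le hD (D_le_zt hδ hδ1 hA ht x y)
  have a2 := inv_norm_le hD (D_le_z0 ht x y)
  have a3 := inv_sub_le hδ hδ1 hA ht x y
  set D := |y - x| + t
  unfold mk
  rw [sq_sub_sq, norm_mul, mul_comm]
  calc _ ≤ (9 * δ * D⁻¹) * (3 * D⁻¹ + 3 * D⁻¹) := by
        gcongr
        exact (norm_add_le _ _).trans (add_le_add a1 a2)
    _ = _ := by field_simp; ring

lemma mk'_bound (hδ : 0 < δ) (hδ1 : δ ≤ 1 / 2) (hA : LipschitzWith (Real.toNNReal δ) A)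
    (ht : 0 < t) (x y : ℝ) : ‖mk' A x t y‖ ≤ 540 * δ * ((|y - x| + t) ^ 3)⁻¹ := by
  have hD := D_pos ht x y
  have a1 := inv_norm_le hD (D_le_zt hδ hδ1 hA ht x y)
  have a2 := inv_norm_le hD (D_le_z0 ht x y)
  have a3 := inv_sub_le hδ hδ1 hA ht x y
  have a4 := abs_deriv_le hδ hA y
  unfold mk'
  set D := |y - x| + t
  set r := (zt A x t y)⁻¹
  set s := (z0 x t y)⁻¹
  have e : -2 * (1 + Complex.ofReal (deriv A y) * Complex.I) * r ^ 3 + 2 * s ^ 3 =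
      -(2 * (Complex.ofReal (deriv A y) * Complex.I * r ^ 3)) -
        2 * ((r - s) * (r ^ 2 + r * s + s ^ 2)) := by ring
  rw [e]
  calc _ ≤ 2 * (|deriv A y| * 1 * ‖r‖ ^ 3) + 2 * (‖r - s‖ * (‖r‖ ^ 2 + ‖r‖ * ‖s‖ + ‖s‖ ^ 2)) := by
        refine (norm_sub_le _ _).trans ?_
        rw [norm_neg, norm_mul, norm_mul, norm_mul, norm_mul, norm_mul, Complex.norm_I,
          Complex.norm_real, Real.norm_eq_abs, norm_pow, Complex.norm_ofNat]
        gcongr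
        refine (norm_add_le _ _).trans (add_le_add ((norm_add_le _ _).trans ?_) (by simp))
        simp
    _ ≤ 2 * (δ * 1 * (3 * D⁻¹) ^ 3) + 2 * ((9 * δ * D⁻¹) *
          ((3 * D⁻¹) ^ 2 + (3 * D⁻¹) * (3 * D⁻¹) + (3 * D⁻¹) ^ 2)) := by
        gcongr
    _ = _ := by field_simp; ring

lemma ll_zt (hA : LipschitzWith (Real.toNNReal δ) A) (x : ℝ) : LocallyLipschitz (zt A x t) := by
  have h1 : LocallyLipschitz fun y : ℝ => (y : ℂ) := Complex.isometry_ofReal.lipschitz.locallyLipschitz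
  have h2 := ll_mul (ll_ofReal hA.locallyLipschitz) (LocallyLipschitz.const Complex.I)
  have h3 : LocallyLipschitz fun y : ℝ => (y : ℂ) + (A y : ℂ) * Complex.I := h1.add h2
  exact h3.sub (LocallyLipschitz.const _)

lemma ll_mk (hδ : 0 < δ) (hδ1 : δ ≤ 1 / 2) (hA : LipschitzWith (Real.toNNReal δ) A)
    (ht : 0 < t) (x : ℝ) : LocallyLipschitz (mk A x t) := by
  have h1 := ll_inv (ll_zt (t := t) hA x) fun y => ne_of_D (D_pos ht x y) (D_le_zt hδ hδ1 hA ht x y)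
  have h2 : LocallyLipschitz fun y => (z0 x t y)⁻¹ := by
    refine ll_inv (ll_smooth ?_) fun y => ne_of_D (D_pos ht x y) (D_le_z0 ht x y)
    exact Complex.ofRealCLM.contDiff.sub contDiff_const
  have h3 := (ll_mul h1 h1).sub (ll_mul h2 h2)
  unfold mk
  simp_rw [sq]
  exact h3

lemma hasDerivAt_zt {y : ℝ} (hy : DifferentiableAt ℝ A y) (x t : ℝ) :
    HasDerivAt (zt A x t) (1 + Complex.ofReal (deriv A y) * Complex.I) y := by
  have := ((Complex.ofRealCLM.hasDerivAt (x := y)).fun_add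
    (hy.hasDerivAt.ofReal_comp.mul_const Complex.I)).sub_const
      ((x : ℂ) + ((A x + t : ℝ) : ℂ) * Complex.I)
  exact this.congr_deriv (by simp)

lemma hasDerivAt_z0 (x t y : ℝ) : HasDerivAt (z0 x t) 1 y := by
  have := (Complex.ofRealCLM.hasDerivAt (x := y)).sub_const ((x : ℂ) + (t : ℂ) * Complex.I)
  exact this.congr_deriv (by simp)

lemma hasDerivAt_mk (hδ : 0 < δ) (hδ1 : δ ≤ 1 / 2) (hA : LipschitzWith (Real.toNNReal δ) A)
    (ht : 0 < t) (x : ℝ) {y : ℝ} (hy : DifferentiableAt ℝ A y) :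
    HasDerivAt (mk A x t) (mk' A x t y) y := by
  have n1 := ne_of_D (D_pos ht x y) (D_le_zt hδ hδ1 hA ht x y)
  have n2 := ne_of_D (D_pos ht x y) (D_le_z0 ht x y)
  have h1 := ((hasDerivAt_zt hy x t).fun_inv n1).fun_pow 2
  have h2 := ((hasDerivAt_z0 x t y).fun_inv n2).fun_pow 2
  refine (h1.fun_sub h2).congr_deriv ?_
  unfold mk'
  simp only [Nat.add_one_sub_one, pow_one, Nat.cast_ofNat]
  field_simp
  ring

lemma tendsto_D (r : ℝ) (n : ℕ) (hn : n ≠ 0) (x t : ℝ) {l : Filter ℝ} (hl : l ≤ cocompact ℝ) :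
    Tendsto (fun y => r * ((|y - x| + t) ^ n)⁻¹) l (𝓝 0) := by
  have h1 : Tendsto (fun y : ℝ => |y - x|) l atTop := by
    have := (tendsto_norm_cocompact_atTop (E := ℝ)).comp
      ((Homeomorph.subRight x).isClosedEmbedding.tendsto_cocompact)
    exact this.mono_left hl
  have h2 := ((tendsto_pow_atTop hn).comp (tendsto_atTop_add_const_right l t h1)).inv_tendsto_atTop
  simpa using h2.const_mul r

lemma continuous_zt (hA : LipschitzWith (Real.toNNReal δ) A) (x t : ℝ) :
    Continuous (zt A x t) := by
  have := hA.continuous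
  unfold zt; fun_prop

lemma continuous_inv_zt (hδ : 0 < δ) (hδ1 : δ ≤ 1 / 2) (hA : LipschitzWith (Real.toNNReal δ) A)
    (ht : 0 < t) (x : ℝ) : Continuous fun y => (zt A x t y)⁻¹ :=
  (continuous_zt hA x t).inv₀ fun y => ne_of_D (D_pos ht x y) (D_le_zt hδ hδ1 hA ht x y)

lemma integrable_inv_sq (hδ : 0 < δ) (hδ1 : δ ≤ 1 / 2) (hA : LipschitzWith (Real.toNNReal δ) A)
    (ht : 0 < t) (x : ℝ) : Integrable fun y => ((zt A x t y)⁻¹) ^ 2 := by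
  refine ((integrable_D2 ht x).const_mul 9).mono'
    ((continuous_inv_zt hδ hδ1 hA ht x).pow 2).aestronglyMeasurable (ae_of_all _ fun y => ?_)
  have hD := D_pos ht x y
  have a1 := inv_norm_le hD (D_le_zt hδ hδ1 hA ht x y)
  rw [norm_pow]
  calc _ ≤ (3 * (|y - x| + t)⁻¹) ^ 2 := by gcongr
    _ = _ := by field_simp; ring

/-- The kernel `1/ζ²` has vanishing integral along the graph, with respect to `dz`. -/
lemma integral_graph (hδ : 0 < δ) (hδ1 : δ ≤ 1 / 2) (hA : LipschitzWith (Real.toNNReal δ) A)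
    (ht : 0 < t) (x : ℝ) :
    ∫ y, (1 + Complex.ofReal (deriv A y) * Complex.I) * ((zt A x t y)⁻¹) ^ 2 = 0 := by
  have hne : ∀ y, zt A x t y ≠ 0 := fun y => ne_of_D (D_pos ht x y) (D_le_zt hδ hδ1 hA ht x y)
  have hto : ∀ l ≤ cocompact ℝ, Tendsto (fun y => -(zt A x t y)⁻¹) l (𝓝 0) := by
    intro l hl
    refine squeeze_zero_norm (fun y => ?_) (tendsto_D 3 1 one_ne_zero x t hl)
    rw [norm_neg, pow_one]
    exact inv_norm_le (D_pos ht x y) (D_le_zt hδ hδ1 hA ht x y)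
  refine ftc (q := fun y => -(zt A x t y)⁻¹) (ll_inv (ll_zt hA x) hne).neg ?_ ?_
    (hto _ atTop_le_cocompact) (hto _ atBot_le_cocompact)
  · filter_upwards [hA.ae_differentiableAt_real] with y hy
    refine ((hasDerivAt_zt hy x t).fun_inv (hne y)).fun_neg.congr_deriv ?_
    field_simp
  · refine (integrable_inv_sq hδ hδ1 hA ht x).bdd_mul (c := 1 + δ) ?_ (ae_of_all _ fun y => ?_)
    · have := measurable_deriv A
      exact (by fun_prop : Measurable fun y =>
        (1 + Complex.ofReal (deriv A y) * Complex.I)).aestronglyMeasurable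
    · refine (norm_add_le _ _).trans ?_
      simpa using abs_deriv_le hδ hA y

lemma lip_zero : LipschitzWith (Real.toNNReal (1 / 2)) (fun _ : ℝ => (0:ℝ)) :=
  (LipschitzWith.const (0:ℝ)).weaken (by positivity)

lemma integrable_inv_sq0 (ht : 0 < t) (x : ℝ) : Integrable fun y => ((z0 x t y)⁻¹) ^ 2 := by
  simpa only [zt_zero] using integrable_inv_sq (by norm_num) le_rfl lip_zero ht x

lemma integral_flat (ht : 0 < t) (x : ℝ) : ∫ y, ((z0 x t y)⁻¹) ^ 2 = 0 := by
  simpa [zt_zero] using integral_graph (by norm_num) le_rfl lip_zero ht x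

/-- The function `F` of the graph, at the point of height `t` above the graph over `x`. -/
noncomputable def FF (A : ℝ → ℝ) (x t : ℝ) : ℂ :=
  (Real.pi : ℂ)⁻¹ * ∫ y, Complex.ofReal (deriv A y) * ((zt A x t y)⁻¹) ^ 2

/-- Comparison of the graph and the flat transform: thanks to the cancellation of both kernels
any constant may be subtracted from `A'`. -/
lemma FF_identity (hδ : 0 < δ) (hδ1 : δ ≤ 1 / 2) (hA : LipschitzWith (Real.toNNReal δ) A)
    (hAs : HasCompactSupport A) (ht : 0 < t) (x c : ℝ) :
    (1 + c * Complex.I) * FF A x t - G2 A (x + t * Complex.I) =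
      (Real.pi : ℂ)⁻¹ * ∫ y, Complex.ofReal (deriv A y - c) * mk A x t y := by
  have i1 := integrable_inv_sq hδ hδ1 hA ht x
  have i0 := integrable_inv_sq0 ht x
  have hmeas : AEStronglyMeasurable (fun y => Complex.ofReal (deriv A y)) volume := by
    have := measurable_deriv A
    exact (by fun_prop : Measurable fun y => Complex.ofReal (deriv A y)).aestronglyMeasurable
  have hb : ∀ᵐ y, ‖Complex.ofReal (deriv A y)‖ ≤ δ := ae_of_all _ fun y => by
    simpa using abs_deriv_le hδ hA y
  have i1a := i1.bdd_mul hmeas hb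
  have i0a := i0.bdd_mul hmeas hb
  have e1 := integral_graph hδ hδ1 hA ht x
  have e0 := integral_flat ht x
  have e1' : (∫ y, ((zt A x t y)⁻¹) ^ 2) +
      Complex.I * ∫ y, Complex.ofReal (deriv A y) * ((zt A x t y)⁻¹) ^ 2 = 0 := by
    rw [← integral_const_mul, ← integral_add i1 (i1a.const_mul _), ← e1]
    congr 1; ext y; ring
  rw [G2_eq hA hAs (by simpa using ht)]
  have e2 : ∫ y, Complex.ofReal (deriv A y - c) * mk A x t y =
      ((∫ y, Complex.ofReal (deriv A y) * ((zt A x t y)⁻¹) ^ 2) -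
        c * ∫ y, ((zt A x t y)⁻¹) ^ 2) -
      ((∫ y, Complex.ofReal (deriv A y) * ((z0 x t y)⁻¹) ^ 2) -
        c * ∫ y, ((z0 x t y)⁻¹) ^ 2) := by
    have j1 : Integrable fun y => Complex.ofReal (deriv A y) * ((zt A x t y)⁻¹) ^ 2 -
        c * ((zt A x t y)⁻¹) ^ 2 := i1a.sub (i1.const_mul _)
    have j0 : Integrable fun y => Complex.ofReal (deriv A y) * ((z0 x t y)⁻¹) ^ 2 -
        c * ((z0 x t y)⁻¹) ^ 2 := i0a.sub (i0.const_mul _)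
    rw [← integral_const_mul, ← integral_const_mul, ← integral_sub i1a (i1.const_mul _),
      ← integral_sub i0a (i0.const_mul _), ← integral_sub j1 j0]
    congr 1; ext y; simp only [mk]; push_cast; ring
  have e3 : ∫ y : ℝ, ((deriv A y : ℝ) : ℂ) / ((y : ℂ) - (x + t * Complex.I)) ^ 2 =
      ∫ y, Complex.ofReal (deriv A y) * ((z0 x t y)⁻¹) ^ 2 := by
    congr 1; ext y; simp only [z0, div_eq_mul_inv, inv_pow]
  rw [e2, e0, e3, FF]
  linear_combination (Real.pi : ℂ)⁻¹ * c * e1'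

end Bd

/-! ### The Poisson extension of `A'` and its boundary values -/

lemma integrable_inv_one_add_sq' : Integrable fun s : ℝ => (1 + s ^ 2)⁻¹ :=
  integrable_inv_one_add_sq

lemma poisson_odd_bound (s : ℝ) : ‖2 * s * ((1 + s ^ 2) ^ 2)⁻¹‖ ≤ (1 + s ^ 2)⁻¹ := by
  have h : 0 < 1 + s ^ 2 := by positivity
  rw [Real.norm_eq_abs, abs_mul, abs_of_pos (by positivity : 0 < ((1 + s ^ 2) ^ 2)⁻¹), abs_mul,
    abs_two]
  calc 2 * |s| * ((1 + s ^ 2) ^ 2)⁻¹ ≤ (1 + s ^ 2) * ((1 + s ^ 2) ^ 2)⁻¹ := by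
        gcongr
        nlinarith [sq_nonneg (|s| - 1), sq_abs s]
    _ = _ := by field_simp

lemma integrable_poisson_odd : Integrable fun s : ℝ => 2 * s * ((1 + s ^ 2) ^ 2)⁻¹ := by
  refine integrable_inv_one_add_sq'.mono' ?_ (ae_of_all _ poisson_odd_bound)
  exact (by fun_prop : Measurable fun s : ℝ => 2 * s * ((1 + s ^ 2) ^ 2)⁻¹).aestronglyMeasurable

lemma integrable_poisson_even : Integrable fun s : ℝ => 2 * s ^ 2 * ((1 + s ^ 2) ^ 2)⁻¹ := by
  refine (integrable_inv_one_add_sq'.const_mul 2).mono' ?_ (ae_of_all _ fun s => ?_)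
  · exact (by fun_prop : Measurable fun s : ℝ =>
      2 * s ^ 2 * ((1 + s ^ 2) ^ 2)⁻¹).aestronglyMeasurable
  · rw [Real.norm_of_nonneg (by positivity)]
    calc _ ≤ 2 * (1 + s ^ 2) * ((1 + s ^ 2) ^ 2)⁻¹ := by gcongr; linarith
      _ = _ := by field_simp

lemma tendsto_one_add_sq {l : Filter ℝ} (hl : l ≤ cocompact ℝ) :
    Tendsto (fun s : ℝ => (1 + s ^ 2)⁻¹) l (𝓝 0) := by
  have h1 : Tendsto (fun s : ℝ => 1 + s ^ 2) l atTop := by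
    refine tendsto_atTop_add_const_left _ _ ?_
    have := ((tendsto_norm_cocompact_atTop (E := ℝ)).mono_left hl)
    have h2 := (tendsto_pow_atTop two_ne_zero).comp this
    refine h2.congr fun s => ?_
    simp
  exact h1.inv_tendsto_atTop

lemma tendsto_div_one_add_sq {l : Filter ℝ} (hl : l ≤ cocompact ℝ) :
    Tendsto (fun s : ℝ => s * (1 + s ^ 2)⁻¹) l (𝓝 0) := by
  have h1 : Tendsto (fun s : ℝ => ‖s‖⁻¹) l (𝓝 0) :=
    ((tendsto_norm_cocompact_atTop (E := ℝ)).mono_left hl).inv_tendsto_atTop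
  refine squeeze_zero_norm (fun s => ?_) h1
  rcases eq_or_ne s 0 with rfl | hs
  · simp
  · rw [norm_mul, Real.norm_of_nonneg (by positivity : 0 ≤ (1 + s ^ 2)⁻¹), Real.norm_eq_abs]
    have : 0 < |s| := by positivity
    rw [← div_eq_mul_inv, div_le_iff₀ (by positivity), ← sq_abs]
    field_simp
    nlinarith

lemma integral_poisson_odd : ∫ s : ℝ, 2 * s * ((1 + s ^ 2) ^ 2)⁻¹ = 0 := by
  refine ftc_real (q := fun s => -(1 + s ^ 2)⁻¹) ?_ (ae_of_all _ fun s => ?_)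
    integrable_poisson_odd ?_ ?_
  · have : ContDiff ℝ 1 fun s : ℝ => -(1 + s ^ 2)⁻¹ :=
      (ContDiff.inv (by fun_prop) fun s => by positivity).neg
    exact this.locallyLipschitz
  · have := (((hasDerivAt_id s).fun_pow 2).const_add 1).fun_inv (by simp; positivity) |>.fun_neg
    refine this.congr_deriv ?_
    simp; ring
  · simpa using (tendsto_one_add_sq atTop_le_cocompact).neg
  · simpa using (tendsto_one_add_sq atBot_le_cocompact).neg

lemma integral_poisson_even : ∫ s : ℝ, 2 * s ^ 2 * ((1 + s ^ 2) ^ 2)⁻¹ = Real.pi := by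
  have h := ftc_real (q := fun s => s * (1 + s ^ 2)⁻¹)
    (q' := fun s => (1 + s ^ 2)⁻¹ - 2 * s ^ 2 * ((1 + s ^ 2) ^ 2)⁻¹) ?_ (ae_of_all _ fun s => ?_)
    (integrable_inv_one_add_sq'.sub integrable_poisson_even)
    (tendsto_div_one_add_sq atTop_le_cocompact) (tendsto_div_one_add_sq atBot_le_cocompact)
  · rw [integral_sub integrable_inv_one_add_sq' integrable_poisson_even,
      integral_univ_inv_one_add_sq] at h
    linarith
  · have : ContDiff ℝ 1 fun s : ℝ => s * (1 + s ^ 2)⁻¹ :=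
      contDiff_id.mul (ContDiff.inv (by fun_prop) fun s => by positivity)
    exact this.locallyLipschitz
  · have := (hasDerivAt_id s).fun_mul
      ((((hasDerivAt_id s).fun_pow 2).const_add 1).fun_inv (by simp; positivity))
    refine this.congr_deriv ?_
    have h : 1 + s ^ 2 ≠ 0 := by positivity
    simp
    field_simp
    ring

lemma im_cauchy {A : ℝ → ℝ} (hAc : Continuous A) (hAs : HasCompactSupport A) (k : ℕ) {t : ℝ}
    (ht : 0 < t) (x : ℝ) :
    ((Real.pi : ℂ)⁻¹ * ∫ y : ℝ, (A y : ℂ) / ((y : ℂ) - (x + t * Complex.I)) ^ k).im =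
      Real.pi⁻¹ * ∫ s : ℝ, A (x + t * s) * (t * ((((t * s : ℝ) : ℂ) - t * Complex.I) ^ k)⁻¹.im) := by
  have hw : 0 < ((x : ℂ) + t * Complex.I).im := by simpa using ht
  have hi : Integrable fun y : ℝ => (A y : ℂ) / ((y : ℂ) - (x + t * Complex.I)) ^ k := by
    have hc : Continuous fun y : ℝ => (((y : ℂ) - (x + t * Complex.I)) ^ k)⁻¹ :=
      Continuous.inv₀ (by fun_prop) fun y => pow_ne_zero _ (sub_ne hw)
    have hAi : Integrable fun y => (A y : ℂ) :=
      (hAc.integrable_of_hasCompactSupport (μ := volume) hAs).ofReal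
    have := hAi.mul_bdd (c := (t ^ k)⁻¹)
      hc.aestronglyMeasurable (ae_of_all _ fun y => ?_)
    · simpa only [div_eq_mul_inv] using this
    · rw [norm_inv, norm_pow]
      gcongr
      simpa using im_le_norm_sub y _ hw
  rw [← Complex.ofReal_inv, Complex.im_ofReal_mul]
  congr 1
  rw [← Complex.imCLM_apply, ← Complex.imCLM.integral_comp_comm hi]
  simp only [Complex.imCLM_apply]
  rw [← integral_add_left_eq_self _ x]
  have := Measure.integral_comp_mul_left (fun v : ℝ =>
    ((A (x + v) : ℂ) / (((x + v : ℝ) : ℂ) - (x + t * Complex.I)) ^ k).im) t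
  rw [abs_of_pos (inv_pos.mpr ht), smul_eq_mul, ← div_eq_inv_mul, eq_div_iff ht.ne', mul_comm] at this
  rw [← this, ← integral_const_mul]
  congr 1; ext s
  rw [div_eq_mul_inv, Complex.im_ofReal_mul]
  push_cast
  rw [show (x : ℂ) + t * s - (x + t * Complex.I) = t * s - t * Complex.I by ring]
  ring

lemma ker_inv {t : ℝ} (ht : 0 < t) (s : ℝ) : (((t * s : ℝ) : ℂ) - t * Complex.I)⁻¹ =
    ((t⁻¹ * (1 + s ^ 2)⁻¹ : ℝ) : ℂ) * (s + Complex.I) := by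
  have h : (1 + s ^ 2 : ℝ) ≠ 0 := by positivity
  have h' : (1 + s ^ 2 : ℂ) ≠ 0 := by exact_mod_cast h
  have h2 : (t : ℂ) ≠ 0 := by exact_mod_cast ht.ne'
  apply inv_eq_of_mul_eq_one_left
  push_cast
  field_simp
  linear_combination -Complex.I_sq

section
variable {A : ℝ → ℝ} {δ t : ℝ}

lemma im_G0 (hAc : Continuous A) (hAs : HasCompactSupport A) (ht : 0 < t) (x : ℝ) :
    (G0 A (x + t * Complex.I)).im = Real.pi⁻¹ * ∫ s : ℝ, A (x + t * s) * (1 + s ^ 2)⁻¹ := by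
  unfold G0
  rw [im_cauchy hAc hAs 1 ht x]
  congr 2; ext s
  rw [pow_one, ker_inv ht s, Complex.im_ofReal_mul]
  simp
  field_simp
  exact Or.inl trivial

/-- Poisson extension of `A'`. -/
noncomputable def uu (A : ℝ → ℝ) (x t : ℝ) : ℝ := (G1 A (x + t * Complex.I)).im

lemma uu_integrand_bound (hδ : 0 < δ) (hA : LipschitzWith (Real.toNNReal δ) A) (ht : 0 < t)
    (x s : ℝ) : ‖(A (x + t * s) - A x) / t * (2 * s * ((1 + s ^ 2) ^ 2)⁻¹)‖ ≤
      δ * (2 * s ^ 2 * ((1 + s ^ 2) ^ 2)⁻¹) := by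
  have h1 := abs_sub_le_of_lip hδ hA x (x + t * s)
  rw [add_sub_cancel_left, abs_mul, abs_of_pos ht] at h1
  rw [norm_mul, norm_div, Real.norm_eq_abs, Real.norm_of_nonneg ht.le, norm_mul, norm_mul,
    Real.norm_of_nonneg (by positivity : 0 ≤ ((1 + s ^ 2) ^ 2)⁻¹), Real.norm_eq_abs s,
    Real.norm_of_nonneg zero_le_two]
  calc _ ≤ (δ * (t * |s|)) / t * (2 * |s| * ((1 + s ^ 2) ^ 2)⁻¹) := by gcongr
    _ = _ := by rw [← sq_abs s]; field_simp

lemma uu_eq (hδ : 0 < δ) (hA : LipschitzWith (Real.toNNReal δ) A) (hAs : HasCompactSupport A)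
    (ht : 0 < t) (x : ℝ) :
    uu A x t = Real.pi⁻¹ * ∫ s : ℝ, (A (x + t * s) - A x) / t * (2 * s * ((1 + s ^ 2) ^ 2)⁻¹) := by
  unfold uu G1
  rw [im_cauchy hA.continuous hAs 2 ht x]
  have i0 : Integrable fun s : ℝ => A x / t * (2 * s * ((1 + s ^ 2) ^ 2)⁻¹) :=
    integrable_poisson_odd.const_mul _
  have hc := hA.continuous
  have i1 : Integrable fun s : ℝ => (A (x + t * s) - A x) / t * (2 * s * ((1 + s ^ 2) ^ 2)⁻¹) :=
    (integrable_poisson_even.const_mul δ).mono'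
      (Measurable.aestronglyMeasurable (by fun_prop))
      (ae_of_all _ (uu_integrand_bound hδ hA ht x))
  have e : ∫ s : ℝ, (A (x + t * s) - A x) / t * (2 * s * ((1 + s ^ 2) ^ 2)⁻¹) =
      ∫ s : ℝ, ((A (x + t * s) - A x) / t * (2 * s * ((1 + s ^ 2) ^ 2)⁻¹) +
        A x / t * (2 * s * ((1 + s ^ 2) ^ 2)⁻¹)) := by
    rw [integral_add i1 i0, integral_const_mul, integral_poisson_odd, mul_zero, add_zero]
  rw [e]
  congr 2; ext s
  rw [← inv_pow, ker_inv ht s, mul_pow, ← Complex.ofReal_pow, Complex.im_ofReal_mul]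
  simp [sq]
  field_simp
  ring

lemma uu_bound (hδ : 0 < δ) (hA : LipschitzWith (Real.toNNReal δ) A) (hAs : HasCompactSupport A)
    (ht : 0 < t) (x : ℝ) : |uu A x t| ≤ δ := by
  rw [uu_eq hδ hA hAs ht x, abs_mul, abs_of_pos (inv_pos.mpr Real.pi_pos)]
  have := norm_integral_le_of_norm_le (integrable_poisson_even.const_mul δ)
    (ae_of_all _ (uu_integrand_bound hδ hA ht x))
  rw [integral_const_mul, integral_poisson_even, Real.norm_eq_abs] at this
  rw [inv_mul_le_iff₀ Real.pi_pos, mul_comm]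
  exact this

/-- The Poisson extension of `A'` converges to `A'` at every point of differentiability of `A`. -/
lemma uu_trace (hδ : 0 < δ) (hA : LipschitzWith (Real.toNNReal δ) A) (hAs : HasCompactSupport A)
    {x : ℝ} (hx : DifferentiableAt ℝ A x) :
    Tendsto (fun t => uu A x t) (𝓝[>] 0) (𝓝 (deriv A x)) := by
  have hc := hA.continuous
  have h1 : Tendsto (fun t => ∫ s : ℝ, (A (x + t * s) - A x) / t * (2 * s * ((1 + s ^ 2) ^ 2)⁻¹))
      (𝓝[>] 0) (𝓝 (∫ s : ℝ, (deriv A x * s) * (2 * s * ((1 + s ^ 2) ^ 2)⁻¹))) := by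
    refine tendsto_integral_filter_of_dominated_convergence _ ?_ ?_
      (integrable_poisson_even.const_mul δ) (ae_of_all _ fun s => ?_)
    · exact Eventually.of_forall fun t => Measurable.aestronglyMeasurable (by fun_prop)
    · filter_upwards [self_mem_nhdsWithin] with t ht
      exact ae_of_all _ (uu_integrand_bound hδ hA ht x)
    · refine Tendsto.mul_const _ ?_
      have hd : HasDerivAt (fun t => A (x + t * s)) (deriv A x * s) 0 := by
        have h0 : HasDerivAt (fun t : ℝ => x + t * s) s 0 := by
          simpa using ((hasDerivAt_id (0:ℝ)).mul_const s).const_add x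
        have hx' : HasDerivAt A (deriv A x) (x + 0 * s) := by simpa using hx.hasDerivAt
        exact hx'.comp (0:ℝ) h0
      refine hd.tendsto_slope_zero_right.congr fun t => ?_
      simp [div_eq_inv_mul]
  have h2 : ∫ s : ℝ, (deriv A x * s) * (2 * s * ((1 + s ^ 2) ^ 2)⁻¹) = deriv A x * Real.pi := by
    rw [← integral_poisson_even, ← integral_const_mul]
    congr 1; ext s; ring
  rw [h2] at h1
  have h3 := h1.const_mul Real.pi⁻¹
  rw [mul_comm (deriv A x), inv_mul_cancel_left₀ Real.pi_pos.ne'] at h3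
  refine h3.congr' ?_
  filter_upwards [self_mem_nhdsWithin] with t ht
  exact (uu_eq hδ hA hAs ht x).symm

lemma G0_trace (hAc : Continuous A) (hAs : HasCompactSupport A) (x : ℝ) :
    Tendsto (fun t : ℝ => (G0 A (x + t * Complex.I)).im) (𝓝[>] 0) (𝓝 (A x)) := by
  obtain ⟨M, hM⟩ := hAs.exists_bound_of_continuous hAc
  have h1 : Tendsto (fun t => ∫ s : ℝ, A (x + t * s) * (1 + s ^ 2)⁻¹)
      (𝓝[>] 0) (𝓝 (∫ s : ℝ, A x * (1 + s ^ 2)⁻¹)) := by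
    refine tendsto_integral_filter_of_dominated_convergence (fun s => M * (1 + s ^ 2)⁻¹) ?_ ?_
      (integrable_inv_one_add_sq'.const_mul M) (ae_of_all _ fun s => ?_)
    · exact Eventually.of_forall fun t => Measurable.aestronglyMeasurable (by fun_prop)
    · refine Eventually.of_forall fun t => ae_of_all _ fun s => ?_
      rw [norm_mul, Real.norm_of_nonneg (by positivity : 0 ≤ (1 + s ^ 2)⁻¹)]
      gcongr
      exact hM _
    · refine Tendsto.mul_const _ ?_
      have : Continuous fun t => A (x + t * s) := by fun_prop
      have := (this.tendsto 0).mono_left (nhdsWithin_le_nhds (s := Ioi 0))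
      simpa using this
  rw [integral_const_mul, integral_univ_inv_one_add_sq] at h1
  have h3 := h1.const_mul Real.pi⁻¹
  rw [mul_comm (A x), inv_mul_cancel_left₀ Real.pi_pos.ne'] at h3
  refine h3.congr' ?_
  filter_upwards [self_mem_nhdsWithin] with t ht
  exact (im_G0 hAc hAs ht x).symm

/-- The remainder in the first order Taylor expansion, around height `t`, of `s ↦ Im G0 (y + is)`,
evaluated at the boundary `s = 0` (with the sign reversed); there `Im G0` takes the value `A y`. -/
noncomputable def VV (A : ℝ → ℝ) (y t : ℝ) : ℝ :=
  (G0 A (y + t * Complex.I)).im - A y - t * (G1 A (y + t * Complex.I)).re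

/-- The integral form of the Taylor remainder majorizing `VV`. -/
noncomputable def WW (A : ℝ → ℝ) (y t : ℝ) : ℝ≥0∞ :=
  ∫⁻ s in Ioc 0 t, ENNReal.ofReal s * ‖G2 A (y + s * Complex.I)‖ₑ

lemma hasDerivAt_vert {G : ℂ → ℂ} {G' : ℂ} {x s : ℝ}
    (h : HasDerivAt G G' (x + s * Complex.I)) :
    HasDerivAt (fun s : ℝ => G (x + s * Complex.I)) (G' * Complex.I) s := by
  have h1 : HasDerivAt (fun s : ℝ => (x : ℂ) + s * Complex.I) Complex.I s := by
    have := ((Complex.ofRealCLM.hasDerivAt (x := s)).mul_const Complex.I).const_add (x : ℂ)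
    simpa using this
  exact h.comp s h1

lemma hasDerivAt_horiz {G : ℂ → ℂ} {G' : ℂ} {x s : ℝ}
    (h : HasDerivAt G G' (x + s * Complex.I)) :
    HasDerivAt (fun x : ℝ => G (x + s * Complex.I)) G' x := by
  have h1 : HasDerivAt (fun x : ℝ => (x : ℂ) + s * Complex.I) 1 x := by
    have := (Complex.ofRealCLM.hasDerivAt (x := x)).add_const ((s : ℂ) * Complex.I)
    simpa using this
  have := h.comp x h1
  rwa [mul_one] at this

/-- Taylor's formula between a small height `e` and `t`, followed by the limit `e → 0`. -/
lemma VV_le (hAc : Continuous A) (hAs : HasCompactSupport A) (ht : 0 < t) (y : ℝ) :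
    ‖VV A y t‖ₑ ≤ WW A y t := by
  have key : ∀ e ∈ Ioc 0 t, ‖(G0 A (y + t * Complex.I)).im - (G0 A (y + e * Complex.I)).im +
      (e - t) * (G1 A (y + t * Complex.I)).re‖ₑ ≤ WW A y t := by
    intro e he
    have hpos : ∀ s ∈ uIcc e t, 0 < s := by
      intro s hs
      rw [uIcc_of_le he.2] at hs
      exact he.1.trans_le hs.1
    have hd : ∀ s ∈ uIcc e t, HasDerivAt (fun s : ℝ => G0 A (y + s * Complex.I) +
        (e - s) * Complex.I * G1 A (y + s * Complex.I))
        ((s - e) * G2 A (y + s * Complex.I)) s := by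
      intro s hs
      have him : 0 < ((y : ℂ) + s * Complex.I).im := by simpa using hpos s hs
      have d0 := hasDerivAt_vert (hasDerivAt_G0 hAc hAs him)
      have d1 := hasDerivAt_vert (hasDerivAt_G1 hAc hAs him)
      have d2 := ((Complex.ofRealCLM.hasDerivAt (x := s)).const_sub (e : ℂ)).mul_const Complex.I
      refine (d0.add (d2.mul d1)).congr_deriv ?_
      simp only [Complex.ofRealCLM_apply, Complex.ofReal_one]
      linear_combination (e - s) * G2 A (y + s * Complex.I) * Complex.I_sq
    have hcont : ContinuousOn (fun s : ℝ => ((s : ℂ) - e) * G2 A (y + s * Complex.I))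
        (uIcc e t) := by
      refine ContinuousOn.mul (by fun_prop) ?_
      refine (continuousOn_G2 hAc hAs).comp (by fun_prop) fun s hs => ?_
      simpa using hpos s hs
    have hI := intervalIntegral.integral_eq_sub_of_hasDerivAt hd hcont.intervalIntegrable
    rw [intervalIntegral.integral_of_le he.2] at hI
    have hE := congrArg Complex.im hI
    have hv : (G0 A (y + t * Complex.I)).im - (G0 A (y + e * Complex.I)).im +
      (e - t) * (G1 A (y + t * Complex.I)).re =
      (∫ s in Ioc e t, ((s : ℂ) - e) * G2 A (y + s * Complex.I)).im := by
      rw [hE]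
      simp
      ring
    rw [hv]
    calc _ ≤ ‖∫ s in Ioc e t, ((s : ℂ) - e) * G2 A (y + s * Complex.I)‖ₑ := by
          rw [← ofReal_norm, ← ofReal_norm]
          exact ENNReal.ofReal_le_ofReal (Complex.abs_im_le_norm _)
      _ ≤ ∫⁻ s in Ioc e t, ‖((s : ℂ) - e) * G2 A (y + s * Complex.I)‖ₑ :=
          enorm_integral_le_lintegral_enorm _
      _ ≤ ∫⁻ s in Ioc e t, ENNReal.ofReal s * ‖G2 A (y + s * Complex.I)‖ₑ := by
          refine setLIntegral_mono' measurableSet_Ioc fun s hs => ?_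
          rw [enorm_mul]
          gcongr
          rw [← ofReal_norm, ← Complex.ofReal_sub, Complex.norm_real, Real.norm_eq_abs,
            abs_of_nonneg (by linarith [hs.1])]
          exact ENNReal.ofReal_le_ofReal (by linarith [he.1])
      _ ≤ WW A y t := lintegral_mono_set (Ioc_subset_Ioc_left he.1.le)
  have hl : Tendsto (fun e : ℝ => ‖(G0 A (y + t * Complex.I)).im - (G0 A (y + e * Complex.I)).im +
      (e - t) * (G1 A (y + t * Complex.I)).re‖ₑ) (𝓝[>] 0) (𝓝 ‖VV A y t‖ₑ) := by
    refine (continuous_enorm.tendsto _).comp ?_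
    have h1 := (tendsto_const_nhds (x := (G0 A (y + t * Complex.I)).im)).sub (G0_trace hAc hAs y)
    have h2 : Tendsto (fun e : ℝ => (e - t) * (G1 A (y + t * Complex.I)).re) (𝓝[>] 0)
        (𝓝 ((0 - t) * (G1 A (y + t * Complex.I)).re)) :=
      ((tendsto_id.mono_left nhdsWithin_le_nhds).sub_const t).mul_const _
    convert h1.add h2 using 2
    simp only [VV]; ring
  refine le_of_tendsto hl ?_
  filter_upwards [Ioc_mem_nhdsGT ht] with e he
  exact key e he

lemma hasDerivAt_VV (hAc : Continuous A) (hAs : HasCompactSupport A) (ht : 0 < t) {y : ℝ}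
    (hy : DifferentiableAt ℝ A y) :
    HasDerivAt (fun y => VV A y t)
      (uu A y t - deriv A y - t * (G2 A (y + t * Complex.I)).re) y := by
  have him : 0 < ((y : ℂ) + t * Complex.I).im := by simpa using ht
  have d0 := Complex.imCLM.hasFDerivAt.comp_hasDerivAt y
    (hasDerivAt_horiz (hasDerivAt_G0 hAc hAs him))
  have d1 := Complex.reCLM.hasFDerivAt.comp_hasDerivAt y
    (hasDerivAt_horiz (hasDerivAt_G1 hAc hAs him))
  exact (d0.sub hy.hasDerivAt).sub (d1.const_mul t)

lemma contDiff_horiz {G G' : ℂ → ℂ} (hd : ∀ w : ℂ, 0 < w.im → HasDerivAt G (G' w) w)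
    (ht : 0 < t) : ContDiff ℝ 1 fun y : ℝ => G (y + t * Complex.I) := by
  have hU : IsOpen {w : ℂ | 0 < w.im} := isOpen_lt continuous_const Complex.continuous_im
  have h1 : DifferentiableOn ℂ G {w : ℂ | 0 < w.im} := fun w hw =>
    (hd w hw).differentiableAt.differentiableWithinAt
  have h2 : ContDiffOn ℂ 1 G {w : ℂ | 0 < w.im} := h1.contDiffOn hU
  have h3 : ContDiffOn ℝ 1 G {w : ℂ | 0 < w.im} := h2.restrict_scalars ℝ
  exact h3.comp_contDiff (Complex.ofRealCLM.contDiff.add contDiff_const) fun y => by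
    simpa using ht

lemma continuous_G2_horiz (hAc : Continuous A) (hAs : HasCompactSupport A) (ht : 0 < t) :
    Continuous fun y : ℝ => G2 A (y + t * Complex.I) := by
  refine (continuousOn_G2 hAc hAs).comp_continuous (by fun_prop) fun y => ?_
  simpa using ht

lemma continuous_uu (hAc : Continuous A) (hAs : HasCompactSupport A) (ht : 0 < t) :
    Continuous fun y : ℝ => uu A y t :=
  Complex.continuous_im.comp (contDiff_horiz (fun _ hw => hasDerivAt_G1 hAc hAs hw) ht).continuous

lemma ll_VV (hA : LipschitzWith (Real.toNNReal δ) A) (hAs : HasCompactSupport A) (ht : 0 < t) :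
    LocallyLipschitz fun y => VV A y t := by
  have hAc := hA.continuous
  have c0 := contDiff_horiz (fun _ hw => hasDerivAt_G0 hAc hAs hw) ht
  have c1 := contDiff_horiz (fun _ hw => hasDerivAt_G1 hAc hAs hw) ht
  have h0 : ContDiff ℝ 1 fun y : ℝ => (G0 A (y + t * Complex.I)).im :=
    Complex.imCLM.contDiff.comp c0
  have h1 : ContDiff ℝ 1 fun y : ℝ => t * (G1 A (y + t * Complex.I)).re :=
    contDiff_const.mul (Complex.reCLM.contDiff.comp c1)
  exact (h0.locallyLipschitz.sub hA.locallyLipschitz).sub h1.locallyLipschitz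

lemma VV_bounded (hAc : Continuous A) (hAs : HasCompactSupport A) (ht : 0 < t) :
    ∃ M, ∀ y, |VV A y t| ≤ M := by
  obtain ⟨M, hM⟩ := G_bound hAc hAs ht
  obtain ⟨N, hN⟩ := hAs.exists_bound_of_continuous hAc
  refine ⟨M + N + t * M, fun y => ?_⟩
  have h0 := (Complex.abs_im_le_norm _).trans (hM y).1
  have h1 := (Complex.abs_re_le_norm _).trans (hM y).2.1
  have hN' : |A y| ≤ N := hN y
  unfold VV
  calc _ ≤ |(G0 A (y + t * Complex.I)).im| + |A y| + |t * (G1 A (y + t * Complex.I)).re| :=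
        (abs_sub _ _).trans (add_le_add_left (abs_sub _ _) _)
    _ ≤ _ := by
        rw [abs_mul, abs_of_pos ht]
        gcongr

end

/-! ### The pointwise linearization estimate -/

/-- The kernel `(|v|+t)⁻²`. -/
noncomputable def K2 (t v : ℝ) : ℝ≥0∞ := ENNReal.ofReal (((|v| + t) ^ 2)⁻¹)

/-- The kernel `(|v|+t)⁻³`. -/
noncomputable def K3 (t v : ℝ) : ℝ≥0∞ := ENNReal.ofReal (((|v| + t) ^ 3)⁻¹)

lemma measurable_K2 (t : ℝ) : Measurable (K2 t) := by unfold K2; fun_prop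

lemma measurable_K3 (t : ℝ) : Measurable (K3 t) := by unfold K3; fun_prop

section
variable {A : ℝ → ℝ} {δ t : ℝ}

lemma measurable_G1 (hAc : Continuous A) : Measurable (G1 A) := by
  unfold G1
  have : StronglyMeasurable (Function.uncurry fun (w : ℂ) (y : ℝ) =>
      (A y : ℂ) / ((y : ℂ) - w) ^ 2) := by
    have := hAc.measurable
    exact Measurable.stronglyMeasurable (by unfold Function.uncurry; fun_prop)
  exact this.integral_prod_right.measurable.const_mul _

lemma measurable_G2 (hAc : Continuous A) : Measurable (G2 A) := by
  unfold G2
  have : StronglyMeasurable (Function.uncurry fun (w : ℂ) (y : ℝ) =>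
      (A y : ℂ) / ((y : ℂ) - w) ^ 3) := by
    have := hAc.measurable
    exact Measurable.stronglyMeasurable (by unfold Function.uncurry; fun_prop)
  exact (this.integral_prod_right.measurable.const_mul _).const_mul _

lemma measurable_FF (hAc : Continuous A) : Measurable fun z : ℝ × ℝ => FF A z.1 z.2 := by
  unfold FF
  have : StronglyMeasurable (Function.uncurry fun (z : ℝ × ℝ) (y : ℝ) =>
      Complex.ofReal (deriv A y) * ((zt A z.1 z.2 y)⁻¹) ^ 2) := by
    have := hAc.measurable
    have := measurable_deriv A
    exact Measurable.stronglyMeasurable (by unfold Function.uncurry zt; fun_prop)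
  exact this.integral_prod_right.measurable.const_mul _

lemma measurable_f (hAc : Continuous A) :
    Measurable fun z : ℝ × ℝ => ‖G2 A (z.1 + z.2 * Complex.I)‖ₑ := by
  have := measurable_G2 hAc
  fun_prop

lemma measurable_uu (hAc : Continuous A) : Measurable fun z : ℝ × ℝ => uu A z.1 z.2 := by
  exact Complex.measurable_im.comp ((measurable_G1 hAc).comp (by fun_prop))

lemma measurable_WW (hAc : Continuous A) (t : ℝ) : Measurable fun y => WW A y t := by
  unfold WW
  refine Measurable.lintegral_prod_right' (f := fun z : ℝ × ℝ =>
    ENNReal.ofReal z.2 * ‖G2 A (z.1 + z.2 * Complex.I)‖ₑ) ?_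
  have := measurable_f hAc
  fun_prop

lemma measurable_mk (hAc : Continuous A) (x t : ℝ) : Measurable (mk A x t) := by
  have := hAc.measurable
  unfold mk zt z0
  fun_prop

lemma measurable_mk' (hAc : Continuous A) (x t : ℝ) : Measurable (mk' A x t) := by
  have := hAc.measurable
  have := measurable_deriv A
  unfold mk' zt z0
  fun_prop

lemma integrable_mk (hδ : 0 < δ) (hδ1 : δ ≤ 1 / 2) (hA : LipschitzWith (Real.toNNReal δ) A)
    (ht : 0 < t) (x : ℝ) : Integrable (mk A x t) :=
  ((integrable_D2 ht x).const_mul (54 * δ)).mono'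
    (measurable_mk hA.continuous x t).aestronglyMeasurable
    (ae_of_all _ fun y => mk_bound hδ hδ1 hA ht x y)

lemma integrable_mk' (hδ : 0 < δ) (hδ1 : δ ≤ 1 / 2) (hA : LipschitzWith (Real.toNNReal δ) A)
    (ht : 0 < t) (x : ℝ) : Integrable (mk' A x t) := by
  refine ((integrable_D2 ht x).const_mul (540 * δ * t⁻¹)).mono'
    (measurable_mk' hA.continuous x t).aestronglyMeasurable
    (ae_of_all _ fun y => (mk'_bound hδ hδ1 hA ht x y).trans ?_)
  rw [pow_succ, mul_inv, mul_comm ((|y - x| + t) ^ 2)⁻¹, ← mul_assoc]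
  gcongr
  linarith [abs_nonneg (y - x)]

/-- After integrating by parts against `VV`, the error term of `FF_identity` only involves
differences and derivatives of the Poisson extension `uu`. -/
lemma error_eq (hδ : 0 < δ) (hδ1 : δ ≤ 1 / 2) (hA : LipschitzWith (Real.toNNReal δ) A)
    (hAs : HasCompactSupport A) (ht : 0 < t) (x c : ℝ) :
    ∫ y, Complex.ofReal (deriv A y - c) * mk A x t y =
      ∫ y, (Complex.ofReal (uu A y t - c) * mk A x t y +
        (Complex.ofReal (VV A y t) * mk' A x t y -
          Complex.ofReal (t * (G2 A (y + t * Complex.I)).re) * mk A x t y)) := by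
  have hAc := hA.continuous
  have hm := integrable_mk hδ hδ1 hA ht x
  have hm' := integrable_mk' hδ hδ1 hA ht x
  obtain ⟨MV, hMV⟩ := VV_bounded hAc hAs ht
  obtain ⟨MG, hMG⟩ := G_bound hAc hAs ht
  have hcf := continuous_G2_horiz hAc hAs ht
  have hcu := continuous_uu hAc hAs ht
  have hlV := ll_VV hA hAs ht
  have hcV := hlV.continuous
  have hda := measurable_deriv A
  have i1 : Integrable fun y => Complex.ofReal (deriv A y - c) * mk A x t y := by
    refine hm.bdd_mul (c := δ + |c|) (Measurable.aestronglyMeasurable (by fun_prop))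
      (ae_of_all _ fun y => ?_)
    rw [Complex.norm_real, Real.norm_eq_abs]
    exact (abs_sub _ _).trans (add_le_add_left (abs_deriv_le hδ hA y) _)
  have i2 : Integrable fun y => Complex.ofReal (VV A y t) * mk' A x t y := by
    refine hm'.bdd_mul (c := MV) (Continuous.aestronglyMeasurable (by fun_prop))
      (ae_of_all _ fun y => ?_)
    rw [Complex.norm_real, Real.norm_eq_abs]
    exact hMV y
  have i3 : Integrable fun y =>
      Complex.ofReal (uu A y t - deriv A y - t * (G2 A (y + t * Complex.I)).re) * mk A x t y := by
    refine hm.bdd_mul (c := δ + δ + t * MG) (Measurable.aestronglyMeasurable ?_)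
      (ae_of_all _ fun y => ?_)
    · exact Complex.measurable_ofReal.comp ((hcu.measurable.sub hda).sub
        ((Complex.measurable_re.comp hcf.measurable).const_mul t))
    · rw [Complex.norm_real, Real.norm_eq_abs]
      refine (abs_sub _ _).trans (add_le_add ((abs_sub _ _).trans (add_le_add
        (uu_bound hδ hA hAs ht y) (abs_deriv_le hδ hA y))) ?_)
      rw [abs_mul, abs_of_pos ht]
      gcongr
      exact (Complex.abs_re_le_norm _).trans (hMG y).2.2
  have hto : ∀ l ≤ cocompact ℝ, Tendsto (fun y => Complex.ofReal (VV A y t) * mk A x t y) l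
      (𝓝 0) := by
    intro l hl
    refine squeeze_zero_norm (fun y => ?_) (tendsto_D (MV * (54 * δ)) 2 two_ne_zero x t hl)
    rw [norm_mul, mul_assoc, Complex.norm_real, Real.norm_eq_abs]
    have := (abs_nonneg _).trans (hMV y)
    gcongr
    · exact hMV y
    · exact mk_bound hδ hδ1 hA ht x y
  have h0 := ftc (q := fun y => Complex.ofReal (VV A y t) * mk A x t y)
    (ll_mul (ll_ofReal hlV) (ll_mk hδ hδ1 hA ht x)) (q' := fun y =>
      Complex.ofReal (uu A y t - deriv A y - t * (G2 A (y + t * Complex.I)).re) * mk A x t y +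
      Complex.ofReal (VV A y t) * mk' A x t y) ?_ (i3.add i2)
    (hto _ atTop_le_cocompact) (hto _ atBot_le_cocompact)
  · have j : Integrable fun y =>
      Complex.ofReal (uu A y t - deriv A y - t * (G2 A (y + t * Complex.I)).re) * mk A x t y +
      Complex.ofReal (VV A y t) * mk' A x t y := i3.add i2
    have h1 := integral_add i1 j
    rw [h0, add_zero] at h1
    rw [← h1]
    congr 1; ext y; push_cast; ring
  · filter_upwards [hA.ae_differentiableAt_real] with y hy
    exact (hasDerivAt_VV hAc hAs ht hy).ofReal_comp.fun_mul (hasDerivAt_mk hδ hδ1 hA ht x hy)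

lemma enorm_le_of_norm_le {z : ℂ} {r : ℝ} (h : ‖z‖ ≤ r) : ‖z‖ₑ ≤ ENNReal.ofReal r := by
  rw [← ofReal_norm]; exact ENNReal.ofReal_le_ofReal h

lemma enorm_ofReal (r : ℝ) : ‖(r : ℂ)‖ₑ = ‖r‖ₑ := by
  rw [← ofReal_norm, ← ofReal_norm, Complex.norm_real]

lemma enorm_pi_inv_le : ‖(Real.pi : ℂ)⁻¹‖ₑ ≤ 1 := by
  rw [← ENNReal.ofReal_one]
  apply enorm_le_of_norm_le
  rw [norm_inv, Complex.norm_real, Real.norm_eq_abs, abs_of_pos Real.pi_pos]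
  exact inv_le_one_of_one_le₀ (by linarith [Real.pi_gt_three])

/-- The flat transform is controlled by the graph transform, up to a term carrying the small
factor `δ`. -/
lemma pointwise (hδ : 0 < δ) (hδ1 : δ ≤ 1 / 2) (hA : LipschitzWith (Real.toNNReal δ) A)
    (hAs : HasCompactSupport A) (ht : 0 < t) (x : ℝ) :
    ‖G2 A (x + t * Complex.I)‖ₑ ≤ 2 * ‖FF A x t‖ₑ + ENNReal.ofReal (540 * δ) *
      ((6⁻¹ * ∫⁻ v, K2 t v * ‖uu A (x + v) t - uu A x t‖ₑ) +
        ((2⁻¹ * ∫⁻ v, K2 t v * (ENNReal.ofReal t * ‖G2 A ((x + v : ℝ) + t * Complex.I)‖ₑ)) +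
          ∫⁻ v, K3 t v * WW A (x + v) t)) := by
  have hAc := hA.continuous
  set c := uu A x t with hc
  have hid := FF_identity hδ hδ1 hA hAs ht x c
  rw [error_eq hδ hδ1 hA hAs ht x c] at hid
  set J := ∫ y, (Complex.ofReal (uu A y t - c) * mk A x t y +
        (Complex.ofReal (VV A y t) * mk' A x t y -
          Complex.ofReal (t * (G2 A (y + t * Complex.I)).re) * mk A x t y)) with hJ
  have e1 : G2 A (x + t * Complex.I) = (1 + c * Complex.I) * FF A x t - (Real.pi : ℂ)⁻¹ * J := by
    linear_combination -hid
  have c1 : ‖(1 + c * Complex.I : ℂ)‖ₑ ≤ 2 := by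
    rw [← ENNReal.ofReal_ofNat]
    apply enorm_le_of_norm_le
    refine (norm_add_le _ _).trans ?_
    have := uu_bound hδ hA hAs ht x
    simp only [norm_one, norm_mul, Complex.norm_real, Real.norm_eq_abs, Complex.norm_I, mul_one]
    linarith
  have c2 : ‖J‖ₑ ≤ ENNReal.ofReal (540 * δ) *
      ((6⁻¹ * ∫⁻ v, K2 t v * ‖uu A (x + v) t - uu A x t‖ₑ) +
        ((2⁻¹ * ∫⁻ v, K2 t v * (ENNReal.ofReal t * ‖G2 A ((x + v : ℝ) + t * Complex.I)‖ₑ)) +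
          ∫⁻ v, K3 t v * WW A (x + v) t)) := by
    have hm2 := measurable_K2 t
    have m1 : Measurable fun v => K2 t v * ‖uu A (x + v) t - uu A x t‖ₑ := by
      have := (measurable_uu hAc).comp (f := fun v : ℝ => (x + v, t)) (by fun_prop)
      simp only [Function.comp_def] at this
      fun_prop
    have m2 : Measurable fun v => K2 t v *
        (ENNReal.ofReal t * ‖G2 A ((x + v : ℝ) + t * Complex.I)‖ₑ) := by
      have := (measurable_f hAc).comp (f := fun v : ℝ => (x + v, t)) (by fun_prop)
      simp only [Function.comp_def] at this
      fun_prop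
    rw [← lintegral_const_mul _ m2, ← lintegral_add_left (by fun_prop),
      ← lintegral_const_mul _ m1, ← lintegral_add_left (by fun_prop),
      ← lintegral_const_mul' _ _ ENNReal.ofReal_ne_top]
    refine (enorm_integral_le_lintegral_enorm _).trans ?_
    rw [← lintegral_add_left_eq_self _ x]
    refine lintegral_mono fun v => ?_
    have b1 := mk_bound hδ hδ1 hA ht x (x + v)
    have b2 := mk'_bound hδ hδ1 hA ht x (x + v)
    rw [add_sub_cancel_left] at b1 b2
    have b1' : ‖mk A x t (x + v)‖ₑ ≤ ENNReal.ofReal (54 * δ) * K2 t v := by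
      rw [K2, ← ENNReal.ofReal_mul (by positivity)]
      exact enorm_le_of_norm_le b1
    have b2' : ‖mk' A x t (x + v)‖ₑ ≤ ENNReal.ofReal (540 * δ) * K3 t v := by
      rw [K3, ← ENNReal.ofReal_mul (by positivity)]
      exact enorm_le_of_norm_le b2
    have s1 : ENNReal.ofReal (54 * δ) ≤ ENNReal.ofReal (540 * δ) * 6⁻¹ := by
      rw [← ENNReal.ofReal_ofNat, ← ENNReal.ofReal_inv_of_pos (by norm_num),
        ← ENNReal.ofReal_mul (by positivity)]
      exact ENNReal.ofReal_le_ofReal (by linarith)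
    have s2 : ENNReal.ofReal (54 * δ) ≤ ENNReal.ofReal (540 * δ) * 2⁻¹ := by
      rw [← ENNReal.ofReal_ofNat, ← ENNReal.ofReal_inv_of_pos (by norm_num),
        ← ENNReal.ofReal_mul (by positivity)]
      exact ENNReal.ofReal_le_ofReal (by linarith)
    refine (enorm_add_le _ _).trans ?_
    rw [mul_add, mul_add]
    refine add_le_add ?_ ((enorm_sub_le).trans ?_)
    · rw [enorm_mul, enorm_ofReal, mul_comm]
      calc _ ≤ (ENNReal.ofReal (540 * δ) * 6⁻¹ * K2 t v) * ‖uu A (x + v) t - c‖ₑ := by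
            gcongr; exact b1'.trans (by gcongr)
        _ = _ := by ring
    · rw [add_comm]
      refine add_le_add ?_ ?_
      · rw [enorm_mul, enorm_ofReal, mul_comm]
        have : ‖t * (G2 A ((x + v : ℝ) + t * Complex.I)).re‖ₑ ≤
            ENNReal.ofReal t * ‖G2 A ((x + v : ℝ) + t * Complex.I)‖ₑ := by
          rw [enorm_mul, ← ofReal_norm t, Real.norm_of_nonneg ht.le, ← ofReal_norm, ← ofReal_norm]
          gcongr
          exact Complex.abs_re_le_norm _
        calc _ ≤ (ENNReal.ofReal (540 * δ) * 2⁻¹ * K2 t v) *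
              (ENNReal.ofReal t * ‖G2 A ((x + v : ℝ) + t * Complex.I)‖ₑ) := by
              gcongr; exact b1'.trans (by gcongr)
          _ = _ := by ring
      · rw [enorm_mul, enorm_ofReal, mul_comm]
        calc _ ≤ (ENNReal.ofReal (540 * δ) * K3 t v) * WW A (x + v) t := by
              gcongr; exact VV_le hAc hAs ht _
          _ = _ := by ring
  rw [e1]
  refine (enorm_sub_le).trans (add_le_add ?_ ?_)
  · rw [enorm_mul]; gcongr
  · rw [enorm_mul]
    calc _ ≤ 1 * ‖J‖ₑ := by gcongr; exact enorm_pi_inv_le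
      _ ≤ _ := by rw [one_mul]; exact c2

end

/-! ### Passage to `Lᵖ` norms on horizontal lines -/

lemma nrm_translate (p : ℝ) (H : ℝ → ℝ≥0∞) (v : ℝ) :
    nrm p volume (fun x => H (x + v)) = nrm p volume H := by
  unfold nrm
  rw [lintegral_add_right_eq_self (fun x => H x ^ p) v]

lemma T1_eq {ψ : ℝ → ℝ≥0∞} (h : Measurable ψ) {t : ℝ} (ht : 0 < t) :
    T1 ψ t = ∫⁻ s in Ioi t, ENNReal.ofReal s⁻¹ * ψ s := by
  unfold T1
  have h1 := setLIntegral_scale_Ioi ht 1 (F := fun s => ENNReal.ofReal s⁻¹ * ψ s) (by fun_prop)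
  rw [one_mul] at h1
  have h2 : ∫⁻ s in Ioi t, ENNReal.ofReal s⁻¹ * ψ s =
      ENNReal.ofReal t * (ENNReal.ofReal t⁻¹ * ∫⁻ s in Ioi t, ENNReal.ofReal s⁻¹ * ψ s) := by
    rw [← mul_assoc, ← ENNReal.ofReal_mul ht.le, mul_inv_cancel₀ ht.ne', ENNReal.ofReal_one, one_mul]
  rw [h2, ← h1, ← lintegral_const_mul' _ _ ENNReal.ofReal_ne_top]
  refine setLIntegral_congr_fun measurableSet_Ioi fun s hs => ?_
  rw [← mul_assoc, ← ENNReal.ofReal_mul ht.le]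
  congr 2; field_simp

lemma T2_eq {ψ : ℝ → ℝ≥0∞} (h : Measurable ψ) {t : ℝ} (ht : 0 < t) :
    ENNReal.ofReal (t ^ 2) * T2 ψ t = ∫⁻ s in Ioc 0 t, ENNReal.ofReal s * ψ s := by
  unfold T2
  have h1 := setLIntegral_scale_Ioc ht 0 1 (F := fun s => ENNReal.ofReal s * ψ s) (by fun_prop)
  rw [one_mul, zero_mul] at h1
  have h2 : ∫⁻ s in Ioc 0 t, ENNReal.ofReal s * ψ s =
      ENNReal.ofReal t * (ENNReal.ofReal t⁻¹ * ∫⁻ s in Ioc 0 t, ENNReal.ofReal s * ψ s) := by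
    rw [← mul_assoc, ← ENNReal.ofReal_mul ht.le, mul_inv_cancel₀ ht.ne', ENNReal.ofReal_one, one_mul]
  rw [h2, ← h1, ← lintegral_const_mul' _ _ ENNReal.ofReal_ne_top,
    ← lintegral_const_mul' _ _ ENNReal.ofReal_ne_top]
  refine setLIntegral_congr_fun measurableSet_Ioc fun s hs => ?_
  rw [← mul_assoc, ← mul_assoc, ← ENNReal.ofReal_mul ht.le, ← ENNReal.ofReal_mul (by positivity)]
  congr 2; ring

lemma T3_eq {ψ : ℝ → ℝ≥0∞} (h : Measurable ψ) {t : ℝ} (ht : 0 < t) :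
    ENNReal.ofReal t * T3 ψ t = ∫⁻ s in Ioc 0 t, ψ s := by
  unfold T3
  have h1 := setLIntegral_scale_Ioc ht 0 1 h
  rw [one_mul, zero_mul] at h1
  rw [h1, ← mul_assoc, ← ENNReal.ofReal_mul ht.le, mul_inv_cancel₀ ht.ne', ENNReal.ofReal_one,
    one_mul]

-- Unfolding these integrals during unification is very costly.
attribute [irreducible] G0 G1 G2 uu FF WW

section
variable {A : ℝ → ℝ} {p δ t : ℝ}

/-- The `Lᵖ` norm of the flat transform at height `t`. -/
noncomputable def phi (A : ℝ → ℝ) (p t : ℝ) : ℝ≥0∞ :=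
  nrm p volume fun x : ℝ => ‖G2 A (x + t * Complex.I)‖ₑ

/-- The `Lᵖ` norm of the graph transform at height `t` above the graph. -/
noncomputable def gam (A : ℝ → ℝ) (p t : ℝ) : ℝ≥0∞ :=
  nrm p volume fun x : ℝ => ‖FF A x t‖ₑ

lemma measurable_phi (hAc : Continuous A) (p : ℝ) : Measurable (phi A p) := by
  unfold phi nrm
  refine Measurable.pow_const (Measurable.lintegral_prod_right'
    (f := fun z : ℝ × ℝ => ‖G2 A (z.2 + z.1 * Complex.I)‖ₑ ^ p) ?_) _
  exact ((measurable_f hAc).comp measurable_swap).pow_const p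

lemma measurable_gam (hAc : Continuous A) (p : ℝ) : Measurable (gam A p) := by
  unfold gam nrm
  refine Measurable.pow_const (Measurable.lintegral_prod_right'
    (f := fun z : ℝ × ℝ => ‖FF A z.2 z.1‖ₑ ^ p) ?_) _
  exact ((measurable_FF hAc).comp measurable_swap).enorm.pow_const p

/-- Vertical derivatives of `uu` are bounded by `G2`. -/
lemma vert_le (hAc : Continuous A) (hAs : HasCompactSupport A) {h : ℝ} (ht : 0 < t) (hth : t ≤ h)
    (x : ℝ) : ‖uu A x h - uu A x t‖ₑ ≤ ∫⁻ s in Ioc t h, ‖G2 A (x + s * Complex.I)‖ₑ := by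
  have hpos : ∀ s ∈ uIcc t h, 0 < ((x : ℂ) + s * Complex.I).im := by
    intro s hs
    rw [uIcc_of_le hth] at hs
    simpa using ht.trans_le hs.1
  have hcont : ContinuousOn (fun s : ℝ => G2 A (x + s * Complex.I) * Complex.I) (uIcc t h) :=
    ((continuousOn_G2 hAc hAs).comp (by fun_prop) hpos).mul continuousOn_const
  have hI := intervalIntegral.integral_eq_sub_of_hasDerivAt
    (fun s hs => hasDerivAt_vert (hasDerivAt_G1 hAc hAs (hpos s hs))) hcont.intervalIntegrable
  rw [intervalIntegral.integral_of_le hth] at hI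
  have e : uu A x h - uu A x t = (∫ s in Ioc t h, G2 A (x + s * Complex.I) * Complex.I).im := by
    rw [hI]; simp [uu]
  rw [e]
  calc _ ≤ ‖∫ s in Ioc t h, G2 A (x + s * Complex.I) * Complex.I‖ₑ := by
        rw [← ofReal_norm, ← ofReal_norm]
        exact ENNReal.ofReal_le_ofReal (Complex.abs_im_le_norm _)
    _ ≤ _ := enorm_integral_le_lintegral_enorm _
    _ = _ := by
        congr 1; ext s
        rw [enorm_mul, ← ofReal_norm Complex.I, Complex.norm_I]; simp

/-- Horizontal derivatives of `uu` are bounded by `G2`. -/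
lemma horiz_le (hAc : Continuous A) (hAs : HasCompactSupport A) (ht : 0 < t) (x v : ℝ) :
    ‖uu A (x + v) t - uu A x t‖ₑ ≤
      ∫⁻ r in uIoc 0 v, ‖G2 A ((x + r : ℝ) + t * Complex.I)‖ₑ := by
  have hpos : ∀ y : ℝ, 0 < ((y : ℂ) + t * Complex.I).im := by
    intro y; simpa using ht
  have hcf := continuous_G2_horiz hAc hAs ht
  have hcont : Continuous (fun r : ℝ => G2 A ((x + r : ℝ) + t * Complex.I)) :=
    hcf.comp (continuous_const.add continuous_id)
  have hd : ∀ r : ℝ, HasDerivAt (fun r : ℝ => G1 A ((x + r : ℝ) + t * Complex.I))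
      (G2 A ((x + r : ℝ) + t * Complex.I)) r := fun r =>
    (hasDerivAt_horiz (hasDerivAt_G1 hAc hAs (hpos (x + r)))).comp_const_add x r
  have hI := intervalIntegral.integral_eq_sub_of_hasDerivAt
    (fun r _ => hd r) (hcont.intervalIntegrable 0 v)
  have e : uu A (x + v) t - uu A x t =
      (∫ r in (0:ℝ)..v, G2 A ((x + r : ℝ) + t * Complex.I)).im := by
    rw [hI]; simp [uu]
  rw [e]
  calc _ ≤ ‖∫ r in (0:ℝ)..v, G2 A ((x + r : ℝ) + t * Complex.I)‖ₑ := by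
        rw [← ofReal_norm, ← ofReal_norm]
        exact ENNReal.ofReal_le_ofReal (Complex.abs_im_le_norm _)
    _ = ‖∫ r in uIoc 0 v, G2 A ((x + r : ℝ) + t * Complex.I)‖ₑ := by
        rw [← ofReal_norm, ← ofReal_norm, intervalIntegral.norm_intervalIntegral_eq]
    _ ≤ _ := enorm_integral_le_lintegral_enorm _

/-- `Lᵖ` modulus of continuity of the Poisson extension at height `t`, obtained by going up to
height `h`, moving horizontally, and going down. -/
lemma path (hp : 1 < p) (hAc : Continuous A) (hAs : HasCompactSupport A) {h : ℝ} (ht : 0 < t)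
    (hth : t ≤ h) (v : ℝ) :
    nrm p volume (fun x => ‖uu A (x + v) t - uu A x t‖ₑ) ≤
      2 * (∫⁻ s in Ioc t h, phi A p s) + ENNReal.ofReal |v| * phi A p h := by
  have hf := measurable_f hAc
  have hh : 0 < h := ht.trans_le hth
  set V : ℝ → ℝ≥0∞ := fun x => ∫⁻ s in Ioc t h, ‖G2 A (x + s * Complex.I)‖ₑ with hV
  set Hz : ℝ → ℝ≥0∞ := fun x => ∫⁻ r in uIoc 0 v, ‖G2 A ((x + r : ℝ) + h * Complex.I)‖ₑ with hHz
  have mV : Measurable V := Measurable.lintegral_prod_right'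
    (f := fun z : ℝ × ℝ => ‖G2 A (z.1 + z.2 * Complex.I)‖ₑ) hf
  have mH0 : Measurable fun z : ℝ × ℝ => ‖G2 A ((z.1 + z.2 : ℝ) + h * Complex.I)‖ₑ :=
    hf.comp (f := fun z : ℝ × ℝ => (z.1 + z.2, h)) (by fun_prop)
  have mH : Measurable Hz := Measurable.lintegral_prod_right' mH0
  have nV : nrm p volume V ≤ ∫⁻ s in Ioc t h, phi A p s :=
    nrm_lintegral_le hp (H := fun (s x : ℝ) => ‖G2 A (x + s * Complex.I)‖ₑ) (hf.comp measurable_swap)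
  have nH : nrm p volume Hz ≤ ENNReal.ofReal |v| * phi A p h := by
    refine (nrm_lintegral_le hp (H := fun r x => ‖G2 A ((x + r : ℝ) + h * Complex.I)‖ₑ)
      (mH0.comp measurable_swap)).trans ?_
    have : ∀ r, nrm p volume (fun x => ‖G2 A ((x + r : ℝ) + h * Complex.I)‖ₑ) = phi A p h :=
      fun r => nrm_translate p (fun x : ℝ => ‖G2 A (x + h * Complex.I)‖ₑ) r
    simp_rw [this]
    rw [setLIntegral_const, mul_comm]
    gcongr
    simp [uIoc, Real.volume_Ioc, max_sub_min_eq_abs]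
  have hpt : ∀ x, ‖uu A (x + v) t - uu A x t‖ₑ ≤ (V (x + v) + V x) + Hz x := by
    intro x
    have e : uu A (x + v) t - uu A x t = (-(uu A (x + v) h - uu A (x + v) t) +
      (uu A x h - uu A x t)) + (uu A (x + v) h - uu A x h) := by ring
    rw [e]
    refine (enorm_add_le _ _).trans (add_le_add ((enorm_add_le _ _).trans (add_le_add ?_ ?_)) ?_)
    · rw [enorm_neg]; exact vert_le hAc hAs ht hth _
    · exact vert_le hAc hAs ht hth _
    · exact horiz_le hAc hAs hh x v
  calc _ ≤ nrm p volume (fun x => (V (x + v) + V x) + Hz x) :=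
        nrm_mono hp (ae_of_all _ hpt)
    _ ≤ nrm p volume (fun x => V (x + v) + V x) + nrm p volume Hz :=
        nrm_add hp ((mV.comp (measurable_add_const v)).add mV) mH
    _ ≤ (nrm p volume (fun x => V (x + v)) + nrm p volume V) + nrm p volume Hz := by
        gcongr
        exact nrm_add hp (mV.comp (measurable_add_const v)) mV
    _ ≤ _ := by
        rw [nrm_translate, two_mul]
        gcongr

lemma tail_inv_sq {τ : ℝ} (hτ : 0 < τ) :
    ∫⁻ h in Ioi τ, ENNReal.ofReal ((h ^ 2)⁻¹) = ENNReal.ofReal τ⁻¹ := by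
  have e : ∀ h ∈ Ioi τ, ENNReal.ofReal ((h ^ 2)⁻¹) = ENNReal.ofReal (h ^ (-2 : ℝ)) := by
    intro h hh
    rw [Real.rpow_neg (hτ.trans hh).le, ← Real.rpow_natCast]; norm_num
  rw [setLIntegral_congr_fun measurableSet_Ioi e, ← ofReal_integral_eq_lintegral_ofReal
    (integrableOn_Ioi_rpow_of_lt (by norm_num) hτ), integral_Ioi_rpow_of_lt (by norm_num) hτ]
  · norm_num [Real.rpow_neg_one]
  · filter_upwards [ae_restrict_mem measurableSet_Ioi] with v hv
    exact Real.rpow_nonneg (hτ.trans hv).le _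

lemma T1_tonelli {ψ : ℝ → ℝ≥0∞} (hψ : Measurable ψ) (ht : 0 < t) :
    ∫⁻ h in Ioi t, ENNReal.ofReal ((h ^ 2)⁻¹) * ∫⁻ s in Ioc t h, ψ s = T1 ψ t := by
  have e1 : ∀ h ∈ Ioi t, ENNReal.ofReal ((h ^ 2)⁻¹) * ∫⁻ s in Ioc t h, ψ s =
      ∫⁻ s in Ioi t, (Ici s).indicator (fun h => ENNReal.ofReal ((h ^ 2)⁻¹)) h * ψ s := by
    intro h hh
    rw [← lintegral_const_mul' _ _ ENNReal.ofReal_ne_top,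
      ← lintegral_indicator measurableSet_Ioc, ← lintegral_indicator measurableSet_Ioi]
    congr 1; ext s
    simp only [indicator, mem_Ioc, mem_Ioi, mem_Ici]
    by_cases h1 : t < s <;> by_cases h2 : s ≤ h <;> simp [h1, h2]
  rw [setLIntegral_congr_fun measurableSet_Ioi e1, lintegral_lintegral_swap, T1_eq hψ ht]
  · refine setLIntegral_congr_fun measurableSet_Ioi fun s hs => ?_
    have hs' : t < s := hs
    have hsub : Ici s ∩ Ioi t = Ici s := inter_eq_left.mpr fun z hz => hs'.trans_le hz
    rw [lintegral_mul_const _ (Measurable.indicator (by fun_prop) measurableSet_Ici),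
      lintegral_indicator measurableSet_Ici, Measure.restrict_restrict measurableSet_Ici, hsub,
      ← setLIntegral_congr (Ioi_ae_eq_Ici (a := s)), tail_inv_sq (ht.trans hs')]
  · have : (Function.uncurry fun h s => (Ici s).indicator
        (fun h => ENNReal.ofReal ((h ^ 2)⁻¹)) h * ψ s) =
        fun z : ℝ × ℝ => {z : ℝ × ℝ | z.2 ≤ z.1}.indicator
          (fun z => ENNReal.ofReal ((z.1 ^ 2)⁻¹) * ψ z.2) z := by
      ext z
      simp only [Function.uncurry, indicator, mem_Ici, Set.mem_ofPred_eq]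
      split_ifs <;> simp
    rw [this]
    exact (Measurable.indicator (by fun_prop)
      (measurableSet_le measurable_snd measurable_fst)).aemeasurable

lemma part_one (hp : 1 < p) (hAc : Continuous A) (hAs : HasCompactSupport A) (ht : 0 < t) :
    nrm p volume (fun x => ∫⁻ v, K2 t v * ‖uu A (x + v) t - uu A x t‖ₑ) ≤
      6 * T1 (phi A p) t := by
  have hu := measurable_uu hAc
  have hφ := measurable_phi hAc p
  have hK := measurable_K2 t
  have m1 : Measurable fun z : ℝ × ℝ => ‖uu A (z.2 + z.1) t - uu A z.2 t‖ₑ := by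
    have h1 := hu.comp (f := fun z : ℝ × ℝ => (z.2 + z.1, t)) (by fun_prop)
    have h2 := hu.comp (f := fun z : ℝ × ℝ => (z.2, t)) (by fun_prop)
    exact (h1.sub h2).enorm
  have mI : Measurable fun h => ∫⁻ s in Ioc t h, phi A p s :=
    Monotone.measurable fun a b hab => lintegral_mono_set (Ioc_subset_Ioc_right hab)
  refine (nrm_lintegral_le hp (H := fun v x => K2 t v * ‖uu A (x + v) t - uu A x t‖ₑ) ?_).trans ?_
  · exact (hK.comp measurable_fst).mul m1
  set g : ℝ → ℝ≥0∞ := fun v => ENNReal.ofReal (((v + t) ^ 2)⁻¹) *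
    (2 * (∫⁻ s in Ioc t (v + t), phi A p s) + ENNReal.ofReal v * phi A p (v + t)) with hg
  have s1 : ∀ v, nrm p volume (fun x => K2 t v * ‖uu A (x + v) t - uu A x t‖ₑ) ≤ g |v| := by
    intro v
    have mx : Measurable fun x : ℝ => ‖uu A (x + v) t - uu A x t‖ₑ :=
      m1.comp (f := fun x : ℝ => (v, x)) (by fun_prop)
    rw [nrm_const_mul hp mx]
    simp only [hg, K2]
    gcongr
    exact path hp hAc hAs ht (by linarith [abs_nonneg v]) v
  refine (lintegral_mono s1).trans ?_
  rw [lint_abs]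
  set G : ℝ → ℝ≥0∞ := fun h => ENNReal.ofReal ((h ^ 2)⁻¹) *
    (2 * (∫⁻ s in Ioc t h, phi A p s) + ENNReal.ofReal (h - t) * phi A p h) with hG
  have s2 : ∫⁻ v in Ioi (0:ℝ), g v = ∫⁻ h in Ioi t, G h := by
    rw [← (measurePreserving_add_right (volume : Measure ℝ) t).setLIntegral_comp_preimage_emb
      (MeasurableEquiv.addRight t).measurableEmbedding G (Ioi t)]
    simp [hg, hG]
  have s3 : ∀ h ∈ Ioi t, G h ≤ 2 * (ENNReal.ofReal ((h ^ 2)⁻¹) * ∫⁻ s in Ioc t h, phi A p s) +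
      ENNReal.ofReal h⁻¹ * phi A p h := by
    intro h hh
    have hh' : t < h := hh
    simp only [hG]
    rw [mul_add, ← mul_assoc _ (ENNReal.ofReal _), ← ENNReal.ofReal_mul (by positivity)]
    refine add_le_add (le_of_eq (by ring)) ?_
    gcongr
    rw [inv_mul_le_iff₀ (by nlinarith), sq, mul_assoc, mul_inv_cancel₀ (by linarith)]
    linarith
  rw [s2]
  calc _ ≤ 2 * ∫⁻ h in Ioi t, (2 * (ENNReal.ofReal ((h ^ 2)⁻¹) * ∫⁻ s in Ioc t h, phi A p s) +
      ENNReal.ofReal h⁻¹ * phi A p h) := by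
        gcongr 2 * ?_
        exact setLIntegral_mono' measurableSet_Ioi s3
    _ = 2 * (2 * T1 (phi A p) t + T1 (phi A p) t) := by
        rw [lintegral_add_left (by fun_prop), lintegral_const_mul _ (by fun_prop),
          T1_tonelli hφ ht, ← T1_eq hφ ht]
    _ = _ := by ring

lemma part_two (hp : 1 < p) (hAc : Continuous A) (ht : 0 < t) :
    nrm p volume (fun x => ∫⁻ v, K2 t v * (ENNReal.ofReal t *
      ‖G2 A ((x + v : ℝ) + t * Complex.I)‖ₑ)) ≤ 2 * phi A p t := by
  have hK := measurable_K2 t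
  have hf := measurable_f hAc
  have m0 : Measurable fun z : ℝ × ℝ => ‖G2 A ((z.2 + z.1 : ℝ) + t * Complex.I)‖ₑ :=
    hf.comp (f := fun z : ℝ × ℝ => (z.2 + z.1, t)) (by fun_prop)
  refine (nrm_lintegral_le hp (H := fun v x => K2 t v * (ENNReal.ofReal t *
      ‖G2 A ((x + v : ℝ) + t * Complex.I)‖ₑ)) ?_).trans ?_
  · exact (hK.comp measurable_fst).mul (m0.const_mul _)
  have s1 : ∀ v, nrm p volume (fun x => K2 t v * (ENNReal.ofReal t *
      ‖G2 A ((x + v : ℝ) + t * Complex.I)‖ₑ)) = K2 t v * (ENNReal.ofReal t * phi A p t) := by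
    intro v
    have m1 : Measurable fun x : ℝ => ‖G2 A ((x + v : ℝ) + t * Complex.I)‖ₑ :=
      m0.comp (f := fun x : ℝ => (v, x)) (by fun_prop)
    rw [nrm_const_mul hp (m1.const_mul _), nrm_const_mul hp m1,
      nrm_translate p (fun x : ℝ => ‖G2 A (x + t * Complex.I)‖ₑ) v]
    rfl
  simp_rw [s1]
  rw [lintegral_mul_const _ hK]
  unfold K2
  rw [lint_D2 ht, ← mul_assoc, ← ENNReal.ofReal_mul (by positivity), mul_assoc,
    inv_mul_cancel₀ ht.ne']
  simp

lemma part_three (hp : 1 < p) (hAc : Continuous A) (ht : 0 < t) :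
    nrm p volume (fun x => ∫⁻ v, K3 t v * WW A (x + v) t) ≤ T2 (phi A p) t := by
  have hK := measurable_K3 t
  have hf := measurable_f hAc
  have hW := measurable_WW hAc t
  have hφ := measurable_phi hAc p
  refine (nrm_lintegral_le hp (H := fun v x => K3 t v * WW A (x + v) t) ?_).trans ?_
  · have h2 : Measurable fun z : ℝ × ℝ => WW A (z.2 + z.1) t :=
      hW.comp (measurable_snd.add measurable_fst)
    exact (hK.comp measurable_fst).mul h2
  have hn : nrm p volume (fun x => WW A x t) ≤ ENNReal.ofReal (t ^ 2) * T2 (phi A p) t := by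
    rw [T2_eq hφ ht]
    unfold WW
    refine (nrm_lintegral_le hp (H := fun (s x : ℝ) =>
      ENNReal.ofReal s * ‖G2 A (x + s * Complex.I)‖ₑ) ?_).trans (le_of_eq ?_)
    · have h1 : Measurable fun z : ℝ × ℝ => ENNReal.ofReal z.1 :=
        ENNReal.measurable_ofReal.comp measurable_fst
      have h2 : Measurable fun z : ℝ × ℝ => ‖G2 A (z.2 + z.1 * Complex.I)‖ₑ :=
        hf.comp measurable_swap
      exact h1.mul h2
    · congr 1; ext s
      have h2 : Measurable fun x : ℝ => ‖G2 A (x + s * Complex.I)‖ₑ :=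
        hf.comp (f := fun x : ℝ => (x, s)) (by fun_prop)
      exact nrm_const_mul hp h2 _
  have s1 : ∀ v, nrm p volume (fun x => K3 t v * WW A (x + v) t) ≤
      K3 t v * (ENNReal.ofReal (t ^ 2) * T2 (phi A p) t) := by
    intro v
    have mx : Measurable fun x : ℝ => WW A (x + v) t := hW.comp (measurable_add_const v)
    rw [nrm_const_mul hp mx, nrm_translate p (fun x : ℝ => WW A x t) v]
    gcongr
  refine (lintegral_mono s1).trans ?_
  rw [lintegral_mul_const _ hK]
  unfold K3
  rw [lint_D3 ht, ← mul_assoc, ← ENNReal.ofReal_mul (by positivity),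
    inv_mul_cancel₀ (by positivity)]
  simp

/-- The one-dimensional inequality to which the absorption argument applies. -/
lemma phi_le (hp : 1 < p) (hδ : 0 < δ) (hδ1 : δ ≤ 1 / 2) (hA : LipschitzWith (Real.toNNReal δ) A)
    (hAs : HasCompactSupport A) (ht : 0 < t) :
    phi A p t ≤ 2 * gam A p t + ENNReal.ofReal (540 * δ) * LL (phi A p) t := by
  have hAc := hA.continuous
  have hu := measurable_uu hAc
  have hf := measurable_f hAc
  have hW := measurable_WW hAc t
  have hK2 := measurable_K2 t
  have hK3 := measurable_K3 t
  have hF : Measurable fun x => ‖FF A x t‖ₑ :=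
    ((measurable_FF hAc).comp (f := fun x : ℝ => (x, t)) (by fun_prop)).enorm
  have m1 : Measurable fun x => ∫⁻ v, K2 t v * ‖uu A (x + v) t - uu A x t‖ₑ := by
    refine Measurable.lintegral_prod_right' (f := fun z : ℝ × ℝ =>
      K2 t z.2 * ‖uu A (z.1 + z.2) t - uu A z.1 t‖ₑ) ?_
    have h1 := hu.comp (f := fun z : ℝ × ℝ => (z.1 + z.2, t)) (by fun_prop)
    have h2 := hu.comp (f := fun z : ℝ × ℝ => (z.1, t)) (by fun_prop)
    exact (hK2.comp measurable_snd).mul (h1.sub h2).enorm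
  have m2 : Measurable fun x => ∫⁻ v, K2 t v * (ENNReal.ofReal t *
      ‖G2 A ((x + v : ℝ) + t * Complex.I)‖ₑ) := by
    refine Measurable.lintegral_prod_right' (f := fun z : ℝ × ℝ =>
      K2 t z.2 * (ENNReal.ofReal t * ‖G2 A ((z.1 + z.2 : ℝ) + t * Complex.I)‖ₑ)) ?_
    have h1 := hf.comp (f := fun z : ℝ × ℝ => (z.1 + z.2, t)) (by fun_prop)
    exact (hK2.comp measurable_snd).mul (h1.const_mul _)
  have m3 : Measurable fun x => ∫⁻ v, K3 t v * WW A (x + v) t := by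
    refine Measurable.lintegral_prod_right' (f := fun z : ℝ × ℝ =>
      K3 t z.2 * WW A (z.1 + z.2) t) ?_
    exact (hK3.comp measurable_snd).mul (hW.comp (by fun_prop))
  refine (nrm_mono hp (ae_of_all _ (pointwise hδ hδ1 hA hAs ht))).trans ?_
  refine (nrm_add hp (by fun_prop) (by fun_prop)).trans ?_
  rw [nrm_const_mul hp hF, nrm_const_mul hp (by fun_prop)]
  refine add_le_add le_rfl ?_
  gcongr
  refine (nrm_add hp (by fun_prop) (by fun_prop)).trans ?_
  refine (add_le_add le_rfl (nrm_add hp (by fun_prop) m3)).trans ?_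
  rw [nrm_const_mul hp m1, nrm_const_mul hp m2]
  unfold LL
  rw [add_assoc]
  refine add_le_add ?_ (add_le_add ?_ (part_three hp hAc ht))
  · calc _ ≤ 6⁻¹ * (6 * T1 (phi A p) t) := by gcongr; exact part_one hp hAc hAs ht
      _ = _ := by rw [← mul_assoc, ENNReal.inv_mul_cancel (by norm_num) (by norm_num), one_mul]
  · calc _ ≤ 2⁻¹ * (2 * phi A p t) := by gcongr; exact part_two hp hAc ht
      _ = _ := by rw [← mul_assoc, ENNReal.inv_mul_cancel (by norm_num) (by norm_num), one_mul]

lemma nrm_deriv_ne_top (hp : 1 < p) (hδ : 0 < δ) (hA : LipschitzWith (Real.toNNReal δ) A)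
    (hAs : HasCompactSupport A) : nrm p volume (fun x => ‖deriv A x‖ₑ) ≠ ∞ := by
  unfold nrm
  have hp0 : 0 < p := by positivity
  refine (ENNReal.rpow_lt_top_of_nonneg (by positivity) ?_).ne
  have h1 : ∀ x, ‖deriv A x‖ₑ ^ p ≤
      (tsupport A).indicator (fun _ => ENNReal.ofReal δ ^ p) x := by
    intro x
    by_cases hx : x ∈ tsupport A
    · rw [indicator_of_mem hx]
      gcongr
      rw [← ofReal_norm]
      exact ENNReal.ofReal_le_ofReal (abs_deriv_le hδ hA x)
    · have : deriv A x = 0 := by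
        by_contra h
        exact hx (support_deriv_subset h)
      simp [this, hp0]
  refine ((lintegral_mono h1).trans_lt ?_).ne
  rw [lintegral_indicator (isClosed_tsupport A).measurableSet, setLIntegral_const]
  exact ENNReal.mul_lt_top (ENNReal.rpow_lt_top_of_nonneg hp0.le ENNReal.ofReal_ne_top)
    hAs.isCompact.measure_lt_top

/-- The crude decay of `φ` needed to start the absorption argument; it follows from Young's
inequality applied to `G2_eq`. -/
lemma phi_apriori (hp : 1 < p) (hA : LipschitzWith (Real.toNNReal δ) A)
    (hAs : HasCompactSupport A) (ht : 0 < t) :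
    phi A p t ≤ (18 * nrm p volume (fun x => ‖deriv A x‖ₑ)) * ENNReal.ofReal t⁻¹ := by
  have hK2 := measurable_K2 t
  have hda := measurable_deriv A
  have h1 : ∀ x : ℝ, ‖G2 A (x + t * Complex.I)‖ₑ ≤
      ∫⁻ v, (9 * K2 t v) * ‖deriv A (x + v)‖ₑ := by
    intro x
    rw [G2_eq hA hAs (by simpa using ht), enorm_mul]
    refine (mul_le_mul_left enorm_pi_inv_le _).trans ?_
    rw [one_mul]
    refine (enorm_integral_le_lintegral_enorm _).trans ?_
    rw [← lintegral_add_left_eq_self _ x]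
    refine lintegral_mono fun v => ?_
    have hD := D_pos ht x (x + v)
    have a1 := inv_norm_le hD (D_le_z0 ht x (x + v))
    rw [add_sub_cancel_left] at a1
    rw [div_eq_mul_inv, enorm_mul, enorm_ofReal, mul_comm]
    gcongr
    have e : (9 : ℝ≥0∞) * K2 t v = ENNReal.ofReal (9 * ((|v| + t) ^ 2)⁻¹) := by
      rw [ENNReal.ofReal_mul (by norm_num), K2]; norm_num
    rw [e]
    apply enorm_le_of_norm_le
    rw [← inv_pow, norm_pow]
    calc _ ≤ (3 * (|v| + t)⁻¹) ^ 2 := by gcongr; exact a1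
      _ = _ := by field_simp; ring
  refine (nrm_mono hp (ae_of_all _ h1)).trans ?_
  refine (nrm_lintegral_le hp (H := fun v x => (9 * K2 t v) * ‖deriv A (x + v)‖ₑ)
    ?_).trans (le_of_eq ?_)
  · exact (((hK2.const_mul 9).comp measurable_fst).mul
      ((hda.comp (measurable_snd.add measurable_fst)).enorm) :
        Measurable fun z : ℝ × ℝ => (9 * K2 t z.1) * ‖deriv A (z.2 + z.1)‖ₑ)
  have s1 : ∀ v, nrm p volume (fun x => (9 * K2 t v) * ‖deriv A (x + v)‖ₑ) =
      (9 * K2 t v) * nrm p volume (fun x => ‖deriv A x‖ₑ) := by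
    intro v
    have mx : Measurable fun x : ℝ => ‖deriv A (x + v)‖ₑ :=
      (hda.comp (measurable_add_const v)).enorm
    rw [nrm_const_mul hp mx,
      nrm_translate p (fun x : ℝ => ‖deriv A x‖ₑ) v]
  simp_rw [s1]
  rw [lintegral_mul_const _ (by fun_prop), lintegral_const_mul _ hK2]
  unfold K2
  rw [lint_D2 ht, ENNReal.ofReal_mul (by norm_num)]
  norm_num
  ring_nf

/-- `Lᵖ` modulus of continuity of `A'`: pass to the limit `t → 0` in `path` with `h = |v|`. -/
lemma trace_path (hp : 1 < p) (hδ : 0 < δ) (hA : LipschitzWith (Real.toNNReal δ) A)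
    (hAs : HasCompactSupport A) {v : ℝ} (hv : v ≠ 0) :
    nrm p volume (fun x => ‖deriv A (x + v) - deriv A x‖ₑ) ≤
      ENNReal.ofReal |v| * (2 * T3 (phi A p) |v| + phi A p |v|) := by
  have hAc := hA.continuous
  have hu := measurable_uu hAc
  have hφ := measurable_phi hAc p
  have hv' : 0 < |v| := abs_pos.mpr hv
  have hp0 : 0 < p := by positivity
  set B := ENNReal.ofReal |v| * (2 * T3 (phi A p) |v| + phi A p |v|) with hB
  have hBe : B = 2 * (∫⁻ s in Ioc 0 |v|, phi A p s) + ENNReal.ofReal |v| * phi A p |v| := by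
    rw [← T3_eq hφ hv', hB]; ring
  set τ : ℕ → ℝ := fun n => |v| / (n + 1) with hτ
  have hτ0 : ∀ n, 0 < τ n := fun n => by simp only [hτ]; positivity
  have hτ1 : ∀ n, τ n ≤ |v| := fun n => by
    simp only [hτ]
    exact div_le_self hv'.le (by linarith [n.cast_nonneg (α := ℝ)])
  have hτl : Tendsto τ atTop (𝓝[>] 0) := by
    refine tendsto_nhdsWithin_iff.mpr ⟨?_, Eventually.of_forall hτ0⟩
    have := (tendsto_one_div_add_atTop_nhds_zero_nat (𝕜 := ℝ)).const_mul |v|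
    simpa [hτ, div_eq_mul_inv] using this
  have hb : ∀ n, ∫⁻ x, ‖uu A (x + v) (τ n) - uu A x (τ n)‖ₑ ^ p ≤ B ^ p := by
    intro n
    rw [← nrm_rpow hp]
    refine ENNReal.rpow_le_rpow ?_ hp0.le
    refine (path hp hAc hAs (hτ0 n) (hτ1 n) v).trans ?_
    rw [hBe]
    gcongr
    exact (hτ0 n).le
  have hae : ∀ᵐ x, DifferentiableAt ℝ A x := hA.ae_differentiableAt_real
  have hae' : ∀ᵐ x, DifferentiableAt ℝ A (x + v) :=
    (measurePreserving_add_right (volume : Measure ℝ) v).quasiMeasurePreserving.ae hae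
  have hlim : ∀ᵐ x, ‖deriv A (x + v) - deriv A x‖ₑ ^ p ≤
      liminf (fun n => ‖uu A (x + v) (τ n) - uu A x (τ n)‖ₑ ^ p) atTop := by
    filter_upwards [hae, hae'] with x hx hx'
    have h1 := ((uu_trace hδ hA hAs hx').comp hτl).sub ((uu_trace hδ hA hAs hx).comp hτl)
    have h2 := ((ENNReal.continuous_rpow_const (y := p)).tendsto _).comp
      ((continuous_enorm.tendsto _).comp h1)
    exact h2.liminf_eq.ge
  have hmain : ∫⁻ x, ‖deriv A (x + v) - deriv A x‖ₑ ^ p ≤ B ^ p := by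
    refine (lintegral_mono_ae hlim).trans ((lintegral_liminf_le fun n => ?_).trans ?_)
    · have h1 := hu.comp (f := fun x : ℝ => (x + v, τ n)) (by fun_prop)
      have h2 := hu.comp (f := fun x : ℝ => (x, τ n)) (by fun_prop)
      exact (h1.sub h2).enorm.pow_const p
    · exact (liminf_le_liminf (Eventually.of_forall hb)).trans (liminf_const _).le
  rw [← nrm_rpow hp] at hmain
  exact (ENNReal.rpow_le_rpow_iff hp0).mp hmain

end

/-! ### The Besov seminorm and the integral over the domain -/

section
variable {A : ℝ → ℝ} {p δ α b : ℝ}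

lemma rpow_nrm_wt (hp : 1 < p) {H : ℝ → ℝ≥0∞} (hH : Measurable H) :
    nrm p (wt b) H ^ p = ∫⁻ t in Ioi 0, ENNReal.ofReal (t ^ b) * H t ^ p := by
  rw [nrm_rpow hp, lintegral_wt b (hH.pow_const p)]

/-- The Besov seminorm of `A'`, bounded by the weighted norm of `φ`. -/
lemma lhs_le (hp : 1 < p) (hδ : 0 < δ) (hA : LipschitzWith (Real.toNNReal δ) A)
    (hAs : HasCompactSupport A) :
    (∫⁻ x : ℝ, ∫⁻ y : ℝ,
        ENNReal.ofReal (|deriv A x - deriv A y| ^ p / |x - y| ^ (α * p))) ≤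
      2 * nrm p (wt (p - α * p)) (fun t => 2 * T3 (phi A p) t + phi A p t) ^ p := by
  have hAc := hA.continuous
  have hp0 : 0 < p := by positivity
  have hda := measurable_deriv A
  have hφ := measurable_phi hAc p
  have hT := measurable_T3 hφ
  have hΨ : Measurable fun t => 2 * T3 (phi A p) t + phi A p t := (hT.const_mul 2).add hφ
  have e1 : ∀ x : ℝ, ∫⁻ y : ℝ,
        ENNReal.ofReal (|deriv A x - deriv A y| ^ p / |x - y| ^ (α * p)) =
      ∫⁻ v : ℝ, ENNReal.ofReal (|v| ^ (-(α * p))) * ‖deriv A (x + v) - deriv A x‖ₑ ^ p := by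
    intro x
    rw [← lintegral_add_left_eq_self _ x]
    refine lintegral_congr fun v => ?_
    have h1 : |x - (x + v)| = |v| := by rw [← abs_neg]; congr 1; ring
    rw [h1, abs_sub_comm, div_eq_mul_inv, mul_comm, ← Real.rpow_neg (abs_nonneg v),
      ENNReal.ofReal_mul (by positivity), ← ENNReal.ofReal_rpow_of_nonneg (abs_nonneg _) hp0.le,
      ← Real.norm_eq_abs (_ - _), ofReal_norm]
  have m1 : Measurable fun z : ℝ × ℝ =>
      ENNReal.ofReal (|z.2| ^ (-(α * p))) * ‖deriv A (z.1 + z.2) - deriv A z.1‖ₑ ^ p := by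
    fun_prop
  simp_rw [e1]
  rw [lintegral_lintegral_swap m1.aemeasurable]
  set g : ℝ → ℝ≥0∞ := fun v => ENNReal.ofReal (v ^ (p - α * p)) *
    (2 * T3 (phi A p) v + phi A p v) ^ p with hg
  have e2 : ∀ᵐ v : ℝ, ∫⁻ x : ℝ, ENNReal.ofReal (|v| ^ (-(α * p))) *
      ‖deriv A (x + v) - deriv A x‖ₑ ^ p ≤ g |v| := by
    have h0 : ∀ᵐ v : ℝ, v ≠ 0 := by
      simp [ae_iff]
    filter_upwards [h0] with v hv
    have hv' : 0 < |v| := abs_pos.mpr hv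
    rw [lintegral_const_mul _ (by fun_prop), ← nrm_rpow hp]
    have h2 := ENNReal.rpow_le_rpow (trace_path hp hδ hA hAs hv) hp0.le
    rw [ENNReal.mul_rpow_of_nonneg _ _ hp0.le, ENNReal.ofReal_rpow_of_nonneg hv'.le hp0.le] at h2
    refine (mul_le_mul_right h2 _).trans (le_of_eq ?_)
    rw [← mul_assoc, ← ENNReal.ofReal_mul (by positivity), ← Real.rpow_add hv', neg_add_eq_sub]
  refine (lintegral_mono_ae e2).trans (le_of_eq ?_)
  rw [lint_abs, rpow_nrm_wt hp hΨ]

/-- The frontier of the domain lies on the graph, so `D_le_zt` bounds the distance from below. -/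
lemma le_infDist (hδ : 0 < δ) (hδ1 : δ ≤ 1 / 2) (hA : LipschitzWith (Real.toNNReal δ) A)
    {z : ℂ} (hz : A z.re < z.im) :
    (z.im - A z.re) / 3 ≤ Metric.infDist z (frontier {w : ℂ | A w.re < w.im}) := by
  have hAc := hA.continuous
  have ht : 0 < z.im - A z.re := sub_pos.mpr hz
  have hne : (frontier {w : ℂ | A w.re < w.im}).Nonempty := by
    rw [nonempty_frontier_iff]
    refine ⟨⟨z, hz⟩, fun h => ?_⟩
    have : (⟨0, A 0⟩ : ℂ) ∈ {w : ℂ | A w.re < w.im} := by rw [h]; trivial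
    exact (lt_irrefl (A 0)) this
  refine (Metric.le_infDist hne).mpr fun w hw => ?_
  have hw' : A w.re = w.im :=
    frontier_lt_subset_eq (hAc.comp Complex.continuous_re) Complex.continuous_im hw
  have h1 := D_le_zt hδ hδ1 hA ht z.re w.re
  have h2 : zt A z.re (z.im - A z.re) w.re = w - z := by
    apply Complex.ext <;> simp [zt, hw']
  rw [h2, ← dist_eq_norm, dist_comm] at h1
  have := abs_nonneg (w.re - z.re)
  linarith

/-- The weighted norm of the graph transform, bounded by the integral over the domain: the domain
is parametrized by `(x, t) ↦ x + (A x + t) i`, and the distance to the boundary is at least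
`t / 3`. -/
lemma gam_le (hp : 1 < p) (hδ : 0 < δ) (hδ1 : δ ≤ 1 / 2)
    (hA : LipschitzWith (Real.toNNReal δ) A) (hb : 0 ≤ b) :
    nrm p (wt b) (gam A p) ^ p ≤ ENNReal.ofReal (3 ^ b) *
      ∫⁻ z in {w : ℂ | A w.re < w.im},
        ENNReal.ofReal
          (‖(Real.pi : ℂ)⁻¹ *
              ∫ x : ℝ, Complex.ofReal (deriv A x) /
                (Complex.ofReal x + Complex.ofReal (A x) * Complex.I - z) ^ 2‖ ^ p *
            Metric.infDist z (frontier {w : ℂ | A w.re < w.im}) ^ b) := by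
  have hAc := hA.continuous
  have hp0 : 0 < p := by positivity
  have hU : MeasurableSet {w : ℂ | A w.re < w.im} :=
    (isOpen_lt (hAc.comp Complex.continuous_re) Complex.continuous_im).measurableSet
  set M : ℝ × ℝ → ℝ≥0∞ := {q : ℝ × ℝ | 0 < q.2}.indicator
    fun q => ‖FF A q.1 q.2‖ₑ ^ p * ENNReal.ofReal ((q.2 / 3) ^ b) with hM
  have mM : Measurable M := by
    refine Measurable.indicator ?_ (measurableSet_lt measurable_const measurable_snd)
    exact ((measurable_FF hAc).enorm.pow_const p).mul (by fun_prop)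
  have s1 : ∫⁻ z : ℂ, M (z.re, z.im - A z.re) ≤ ∫⁻ z in {w : ℂ | A w.re < w.im},
        ENNReal.ofReal
          (‖(Real.pi : ℂ)⁻¹ *
              ∫ x : ℝ, Complex.ofReal (deriv A x) /
                (Complex.ofReal x + Complex.ofReal (A x) * Complex.I - z) ^ 2‖ ^ p *
            Metric.infDist z (frontier {w : ℂ | A w.re < w.im}) ^ b) := by
    rw [← lintegral_indicator hU]
    refine lintegral_mono fun z => ?_
    by_cases hz : A z.re < z.im
    · have ht : 0 < z.im - A z.re := sub_pos.mpr hz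
      have hF : (Real.pi : ℂ)⁻¹ * ∫ x : ℝ, Complex.ofReal (deriv A x) /
          (Complex.ofReal x + Complex.ofReal (A x) * Complex.I - z) ^ 2 =
          FF A z.re (z.im - A z.re) := by
        have hzz : ((z.re : ℂ) + ((A z.re + (z.im - A z.re) : ℝ) : ℂ) * Complex.I) = z := by
          rw [add_sub_cancel, Complex.re_add_im]
        unfold FF zt
        simp only [hzz, div_eq_mul_inv, inv_pow]
      rw [indicator_of_mem (show z ∈ {w : ℂ | A w.re < w.im} from hz), hM,
        indicator_of_mem (show (z.re, z.im - A z.re) ∈ {q : ℝ × ℝ | 0 < q.2} from ht), hF,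
        ENNReal.ofReal_mul (by positivity), ← ENNReal.ofReal_rpow_of_nonneg (norm_nonneg _) hp0.le,
        ofReal_norm]
      gcongr
      exact le_infDist hδ hδ1 hA hz
    · rw [hM, indicator_of_notMem (show (z.re, z.im - A z.re) ∉ {q : ℝ × ℝ | 0 < q.2} from
        fun h => hz (sub_pos.mp h))]
      exact zero_le
  have mM' : Measurable fun q : ℝ × ℝ => M (q.1, q.2 - A q.1) :=
    mM.comp (measurable_fst.prodMk (measurable_snd.sub (hAc.measurable.comp measurable_fst)))
  have s2 : ∫⁻ z : ℂ, M (z.re, z.im - A z.re) = ∫⁻ x, ∫⁻ t, M (x, t) := by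
    have h1 := Complex.volume_preserving_equiv_real_prod.lintegral_comp mM'
    have h2 : ∫⁻ z : ℂ, M (z.re, z.im - A z.re) =
        ∫⁻ q : ℝ × ℝ, M (q.1, q.2 - A q.1) := h1
    rw [h2, Measure.volume_eq_prod, lintegral_prod _ mM'.aemeasurable]
    exact lintegral_congr fun x => lintegral_sub_right_eq_self (fun t => M (x, t)) (A x)
  have s3 : ∫⁻ x, ∫⁻ t, M (x, t) =
      ∫⁻ t in Ioi 0, ENNReal.ofReal ((t / 3) ^ b) * gam A p t ^ p := by
    rw [lintegral_lintegral_swap (f := fun x t => M (x, t)) mM.aemeasurable,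
      ← lintegral_indicator measurableSet_Ioi]
    refine lintegral_congr fun t => ?_
    have mt : Measurable fun x => ‖FF A x t‖ₑ ^ p :=
      ((measurable_FF hAc).comp (measurable_id.prodMk measurable_const)).enorm.pow_const p
    by_cases ht : 0 < t
    · rw [indicator_of_mem (show t ∈ Ioi 0 from ht), gam, nrm_rpow hp, mul_comm,
        ← lintegral_mul_const _ mt]
      refine lintegral_congr fun x => ?_
      rw [hM, indicator_of_mem (show (x, t) ∈ {q : ℝ × ℝ | 0 < q.2} from ht)]
    · rw [indicator_of_notMem (show t ∉ Ioi 0 from ht)]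
      refine (lintegral_congr fun x => ?_).trans lintegral_zero
      rw [hM, indicator_of_notMem (show (x, t) ∉ {q : ℝ × ℝ | 0 < q.2} from ht)]
  have s4 : ∀ t ∈ Ioi (0:ℝ), ENNReal.ofReal (t ^ b) * gam A p t ^ p =
      ENNReal.ofReal (3 ^ b) * (ENNReal.ofReal ((t / 3) ^ b) * gam A p t ^ p) := by
    intro t ht
    have ht' : (0:ℝ) < t := ht
    rw [← mul_assoc, ← ENNReal.ofReal_mul (by positivity),
      ← Real.mul_rpow (by norm_num) (by positivity)]
    congr 4; ring
  rw [rpow_nrm_wt hp (measurable_gam hAc p), setLIntegral_congr_fun measurableSet_Ioi s4,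
    lintegral_const_mul' _ _ ENNReal.ofReal_ne_top, ← s3, ← s2]
  gcongr

end
end Beur

theorem statement0 (α p : ℝ) (hα : 0 < α) (hα1 : α ≤ 1) (hp1 : 1 < p) (hαp : 1 < α * p) :
    ∃ δ : ℝ, 0 < δ ∧ ∃ C : ℝ, 0 < C ∧
      ∀ A : ℝ → ℝ, LipschitzWith (Real.toNNReal δ) A → HasCompactSupport A →
        (∫⁻ x : ℝ, ∫⁻ y : ℝ,
            ENNReal.ofReal (|deriv A x - deriv A y| ^ p / |x - y| ^ (α * p))) ≤
          ENNReal.ofReal C *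
            ∫⁻ z in {w : ℂ | A w.re < w.im},
              ENNReal.ofReal
                (‖(Real.pi : ℂ)⁻¹ *
                    ∫ x : ℝ, Complex.ofReal (deriv A x) /
                      (Complex.ofReal x + Complex.ofReal (A x) * Complex.I - z) ^ 2‖ ^ p *
                  Metric.infDist z (frontier {w : ℂ | A w.re < w.im}) ^ (p - α * p)) := by
  have hp0 : 0 < p := by positivity
  have hb0 : 0 ≤ p - α * p := by nlinarith
  have hb : p - α * p + 1 < p := by linarith
  obtain ⟨CL, hCL, hL⟩ := Beur.nrm_LL hp1 (by linarith) hb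
  obtain ⟨C3, hC3, h3⟩ := Beur.nrm_T3 hp1 hb
  have hc : 0 ≤ CL.toReal := ENNReal.toReal_nonneg
  -- `δ` makes the perturbation `540 δ · LL` absorbable on the weighted `Lᵖ` space.
  set δ : ℝ := 1 / (1080 * (CL.toReal + 3)) with hδd
  have hδ : 0 < δ := by positivity
  have hδ1 : δ ≤ 1 / 2 := by
    rw [hδd]
    gcongr
    linarith
  have hεr : 540 * δ * (CL.toReal + 3) = 1 / 2 := by
    rw [hδd]; field_simp; norm_num
  have half : ENNReal.ofReal (1 / 2) = 2⁻¹ := by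
    rw [one_div, ENNReal.ofReal_inv_of_pos (by norm_num)]; norm_num
  have hε1 : ENNReal.ofReal (540 * δ) * CL ≤ 2⁻¹ := by
    rw [← ENNReal.ofReal_toReal hCL, ← ENNReal.ofReal_mul (by positivity), ← half]
    apply ENNReal.ofReal_le_ofReal
    nlinarith
  have hε3 : ENNReal.ofReal (540 * δ) * 3 ≤ 2⁻¹ := by
    rw [show (3 : ENNReal) = ENNReal.ofReal 3 by norm_num, ← ENNReal.ofReal_mul (by positivity),
      ← half]
    apply ENNReal.ofReal_le_ofReal
    nlinarith [mul_nonneg hδ.le hc]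
  set C : ENNReal := 2 * (((2 * C3 + 1) * 4) ^ p * ENNReal.ofReal (3 ^ (p - α * p))) with hC
  have hCt : C ≠ ⊤ := by
    refine ENNReal.mul_ne_top (by norm_num) (ENNReal.mul_ne_top ?_ ENNReal.ofReal_ne_top)
    exact ENNReal.rpow_ne_top_of_nonneg hp0.le (by finiteness)
  refine ⟨δ, hδ, C.toReal + 1, by positivity, fun A hA hAs => ?_⟩
  have hAc := hA.continuous
  have hφ := Beur.measurable_phi hAc p
  have key := Beur.absorb (p := p) (b := p - α * p) hp1 hL hε1 hε3
    (K := 18 * Beur.nrm p volume (fun x => ‖deriv A x‖ₑ))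
    (ENNReal.mul_ne_top (by norm_num) (Beur.nrm_deriv_ne_top hp1 hδ hA hAs))
    (Beur.measurable_gam hAc p)
    (fun t ht => Beur.phi_apriori hp1 hA hAs ht)
    (fun t ht => Beur.phi_le hp1 hδ hδ1 hA hAs ht)
  have hΨ : Beur.nrm p (Beur.wt (p - α * p))
      (fun t => 2 * Beur.T3 (Beur.phi A p) t + Beur.phi A p t) ≤
      (2 * C3 + 1) * 4 * Beur.nrm p (Beur.wt (p - α * p)) (Beur.gam A p) := by
    have hT := Beur.measurable_T3 hφ
    calc _ ≤ _ := Beur.nrm_add hp1 (hT.const_mul 2) hφ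
      _ = 2 * Beur.nrm p (Beur.wt (p - α * p)) (Beur.T3 (Beur.phi A p)) +
          Beur.nrm p (Beur.wt (p - α * p)) (Beur.phi A p) := by
        rw [Beur.nrm_const_mul hp1 hT]
      _ ≤ 2 * (C3 * Beur.nrm p (Beur.wt (p - α * p)) (Beur.phi A p)) +
          Beur.nrm p (Beur.wt (p - α * p)) (Beur.phi A p) := by
        gcongr
        exact h3 _ hφ
      _ = (2 * C3 + 1) * Beur.nrm p (Beur.wt (p - α * p)) (Beur.phi A p) := by ring
      _ ≤ (2 * C3 + 1) * (4 * Beur.nrm p (Beur.wt (p - α * p)) (Beur.gam A p)) := by gcongr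
      _ = _ := by ring
  refine (Beur.lhs_le hp1 hδ hA hAs).trans ?_
  have h4 := ENNReal.rpow_le_rpow hΨ hp0.le
  rw [ENNReal.mul_rpow_of_nonneg _ _ hp0.le] at h4
  refine (mul_le_mul_right h4 2).trans ?_
  refine (mul_le_mul_right (mul_le_mul_right (Beur.gam_le hp1 hδ hδ1 hA hb0) _) 2).trans ?_
  rw [← mul_assoc (_ ^ p), ← mul_assoc 2, ← hC]
  gcongr
  rw [ENNReal.le_ofReal_iff_toReal_le hCt (by positivity)]
  linarith
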